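/- Let d ≥ 1, α ∈ (0,1] with 2α < d, A, B > 0, T > 0. Let ρ, n ∈ C^1([0,T] × ℝ^d; [0,∞)) be such that there is a fixed compact set containing the x-supports of ρ(t,·) and n(t,·) for all t ∈ [0,T], and let u, v ∈ C^1([0,T] × ℝ^d; ℝ^d) with L := sup_{t,x} |∇v(t,x)| < ∞, such that the continuity equations A ∂_t ρ + B ∇·(ρ u) = 0 and A ∂_t n + B ∇·(n v) = 0 hold pointwise. Set E(t) := ∫_{ℝ^d} (ρ−n)(t,x) ( K ⋆ (ρ−n)(t,·) )(x) dx. Then E is differentiable on (0,T), and there exists C > 0 depending only on d, α and L such that for all t ∈ (0,T): −B ∫_{ℝ^d} ρ(t,x) (u−v)(t,x) · ∇( K ⋆ (ρ−n)(t,·) )(x) dx ≤ −(A/2) E'(t) + C B E(t). -/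

import Mathlib

open MeasureTheory Real
open scoped RealInnerProductSpace

/-- Divergence of a vector field on Euclidean space. -/
noncomputable def ediv {d : ℕ}
    (G : EuclideanSpace ℝ (Fin d) → EuclideanSpace ℝ (Fin d))
    (ξ : EuclideanSpace ℝ (Fin d)) : ℝ :=
  ∑ i, fderiv ℝ G ξ (EuclideanSpace.single i 1) i

/-!
Let `σ = ρ - n` and let `φ` be its potential. The relative flux is `ρ u - n v = ρ (u - v) + σ v`,
so pairing the equation for `σ` with `φ` expresses `∫ ρ (u - v) · ∇φ` through `E'` and the
commutator `∫ σ v · ∇φ`, which has to be bounded by a multiple of `E = ∫ σ φ`.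

If `σ = (l - Δ) φ`, then up to the energy density and `∇v` the commutator density is the divergence
of `e v - (∇φ · v) ∇φ`, where `e = (l φ² + |∇φ|²) / 2`. Integrating gives the bound with a constant
that does not depend on `l`. The resolvent kernel is the superposition of heat kernels with weight
`exp (-l t)`, while the Riesz kernel has weight `t ^ (α - 1)`. For `α ≤ 1` the latter weight is a
positive superposition of the former ones (a limit of them for `α = 1`), so the bound passes to the
Riesz kernel.
-/

namespace RieszEnergy

open Module (finrank)

section Divergence

variable {E : Type*} [NormedAddCommGroup E] [InnerProductSpace ℝ E] [FiniteDimensional ℝ E]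

/-- The divergence of a vector field, as the trace of its derivative; it is `0` at points of
non-differentiability. -/
noncomputable def divergence (X : E → E) (x : E) : ℝ := LinearMap.trace ℝ E (fderiv ℝ X x)

variable (E) in
/-- The trace as a continuous linear functional on endomorphisms. -/
noncomputable def traceCLM : (E →L[ℝ] E) →L[ℝ] ℝ :=
  LinearMap.toContinuousLinearMap ((LinearMap.trace ℝ E).comp (ContinuousLinearMap.coeLM ℝ))

theorem ediv_eq_divergence {d : ℕ} (X : EuclideanSpace ℝ (Fin d) → EuclideanSpace ℝ (Fin d)) :
    ediv X = divergence X := by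
  funext x
  rw [divergence, LinearMap.trace_eq_sum_inner _ (EuclideanSpace.basisFun (Fin d) ℝ)]
  simp [ediv, EuclideanSpace.inner_single_left]

theorem abs_trace_le (T : E →L[ℝ] E) : |LinearMap.trace ℝ E T| ≤ finrank ℝ E * ‖T‖ := by
  let b := stdOrthonormalBasis ℝ E
  have entry_le : ∀ i, |⟪b i, T (b i)⟫| ≤ ‖T‖ := fun i => by
    simpa using (abs_real_inner_le_norm (b i) (T (b i))).trans
      (mul_le_mul_of_nonneg_left (T.le_opNorm (b i)) (norm_nonneg (b i)))
  calc |LinearMap.trace ℝ E T| = |∑ i, ⟪b i, T (b i)⟫| := by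
        rw [LinearMap.trace_eq_sum_inner _ b]; rfl
    _ ≤ ∑ i, |⟪b i, T (b i)⟫| := Finset.abs_sum_le_sum_abs _ _
    _ ≤ ∑ _i : Fin (finrank ℝ E), ‖T‖ := Finset.sum_le_sum fun i _ => entry_le i
    _ = finrank ℝ E * ‖T‖ := by simp

theorem divergence_smul {Φ : E → ℝ} {X : E → E} {x : E} (hΦ : DifferentiableAt ℝ Φ x)
    (hX : DifferentiableAt ℝ X x) :
    divergence (fun y => Φ y • X y) x = Φ x * divergence X x + fderiv ℝ Φ x (X x) := by
  have rank_one : LinearMap.trace ℝ E ((fderiv ℝ Φ x).smulRight (X x) : E →L[ℝ] E) =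
      fderiv ℝ Φ x (X x) := LinearMap.trace_smulRight _ _
  simp only [divergence, fderiv_fun_smul hΦ hX, ContinuousLinearMap.toLinearMap_add,
    ContinuousLinearMap.toLinearMap_smul, map_add, map_smul, smul_eq_mul, rank_one]

omit [FiniteDimensional ℝ E] in
theorem divergence_sub {X Y : E → E} {x : E} (hX : DifferentiableAt ℝ X x)
    (hY : DifferentiableAt ℝ Y x) :
    divergence (fun y => X y - Y y) x = divergence X x - divergence Y x := by
  simp only [divergence, fderiv_fun_sub hX hY, ContinuousLinearMap.toLinearMap_sub, map_sub]

variable [MeasurableSpace E] [BorelSpace E]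

theorem integral_divergence_eq_zero {X : E → E} (hX : Differentiable ℝ X)
    (hXint : Integrable X) (hXint' : Integrable (fderiv ℝ X)) : ∫ x, divergence X x = 0 := by
  have directional : ∀ w, ∫ x, fderiv ℝ X x w = 0 := fun w => by
    simpa using integral_smul_fderiv_eq_neg_fderiv_smul_of_integrable (μ := volume)
      (f := fun _ : E => (1 : ℝ)) (g := X) (v := w) (by simp)
      (by simpa using hXint'.apply_continuousLinearMap w) (by simpa using hXint)
      (fun _ _ => differentiableAt_const _) (fun x _ => hX x)
  have h : ∫ x, fderiv ℝ X x = 0 := by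
    ext w
    rw [ContinuousLinearMap.integral_apply hXint', directional w, zero_apply]
  calc ∫ x, divergence X x = traceCLM E (∫ x, fderiv ℝ X x) :=
        (traceCLM E).integral_comp_comm hXint'
    _ = 0 := by rw [h, map_zero]

theorem integral_mul_divergence {Φ : E → ℝ} {X : E → E} (hΦ : ContDiff ℝ 1 Φ)
    (hX : ContDiff ℝ 1 X) (hXc : HasCompactSupport X) :
    ∫ x, Φ x * divergence X x = -∫ x, fderiv ℝ Φ x (X x) := by
  have hΦX : ContDiff ℝ 1 (fun x => Φ x • X x) := hΦ.smul hX
  have hΦXc : HasCompactSupport (fun x => Φ x • X x) := hXc.smul_left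
  have flux_zero := integral_divergence_eq_zero (hΦX.differentiable one_ne_zero)
    (hΦX.continuous.integrable_of_hasCompactSupport hΦXc)
    ((hΦX.continuous_fderiv one_ne_zero).integrable_of_hasCompactSupport (hΦXc.fderiv ℝ))
  have div_cont : Continuous (divergence X) :=
    (traceCLM E).continuous.comp (hX.continuous_fderiv one_ne_zero)
  have div_supp : HasCompactSupport (divergence X) :=
    (hXc.fderiv ℝ).comp_left (map_zero (traceCLM E))
  have int_left : Integrable (fun x => Φ x * divergence X x) :=
    (hΦ.continuous.mul div_cont).integrable_of_hasCompactSupport div_supp.mul_left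
  have int_right : Integrable (fun x => fderiv ℝ Φ x (X x)) :=
    ((hΦ.continuous_fderiv one_ne_zero).clm_apply hX.continuous).integrable_of_hasCompactSupport
      (hXc.mono fun x hx h => hx (by simp [h]))
  simp only [divergence_smul (hΦ.differentiable one_ne_zero _) (hX.differentiable one_ne_zero _)]
    at flux_zero
  rw [integral_add int_left int_right] at flux_zero
  linarith

end Divergence

section StressTensor

open scoped SchwartzMap Laplacian LineDeriv

variable {E : Type*} [NormedAddCommGroup E] [InnerProductSpace ℝ E] [FiniteDimensional ℝ E]

/-- The gradient of a scalar Schwartz function, as a Schwartz vector field. -/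
noncomputable def schwartzGradient (φ : 𝓢(E, ℝ)) : 𝓢(E, E) :=
  (SchwartzMap.fderivCLM ℝ E ℝ φ).postcompCLM
    (InnerProductSpace.toDual ℝ E).symm.toContinuousLinearEquiv.toContinuousLinearMap

theorem inner_schwartzGradient (φ : 𝓢(E, ℝ)) (x w : E) :
    ⟪schwartzGradient φ x, w⟫ = fderiv ℝ φ x w := by
  simp [schwartzGradient, SchwartzMap.postcompCLM_apply]

theorem inner_fderiv_schwartzGradient (φ : 𝓢(E, ℝ)) (x w w' : E) :
    ⟪fderiv ℝ (schwartzGradient φ) x w, w'⟫ = fderiv ℝ (fderiv ℝ φ) x w w' := by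
  have gradient_eq : ⇑(schwartzGradient φ) = (InnerProductSpace.toDual ℝ E).symm ∘ fderiv ℝ φ := rfl
  rw [gradient_eq, LinearIsometryEquiv.comp_fderiv]
  exact InnerProductSpace.toDual_symm_apply

theorem fderiv_schwartzGradient_symm (φ : 𝓢(E, ℝ)) (x w w' : E) :
    ⟪fderiv ℝ (schwartzGradient φ) x w, w'⟫ = ⟪fderiv ℝ (schwartzGradient φ) x w', w⟫ := by
  simpa only [inner_fderiv_schwartzGradient] using
    (φ.smooth 2).contDiffAt.isSymmSndFDerivAt (by simp) w w'

theorem divergence_schwartzGradient (φ : 𝓢(E, ℝ)) (x : E) :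
    divergence (schwartzGradient φ) x = Δ φ x := by
  let b := stdOrthonormalBasis ℝ E
  rw [divergence, LinearMap.trace_eq_sum_inner _ b, SchwartzMap.laplacian_apply,
    InnerProductSpace.laplacian_eq_iteratedFDeriv_orthonormalBasis _ b]
  refine Finset.sum_congr rfl fun i _ => ?_
  rw [real_inner_comm, iteratedFDeriv_two_apply]
  exact inner_fderiv_schwartzGradient φ x (b i) (b i)

/-- The energy density `(l φ² + |∇φ|²) / 2` of a potential `φ` for the operator `l - Δ`. -/
noncomputable def energyDensity (l : ℝ) (φ : 𝓢(E, ℝ)) : 𝓢(E, ℝ) :=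
  (1 / 2 : ℝ) • (l • SchwartzMap.pairing (ContinuousLinearMap.mul ℝ ℝ) φ φ +
    SchwartzMap.pairing (ContinuousLinearMap.id ℝ (E →L[ℝ] ℝ)) (SchwartzMap.fderivCLM ℝ E ℝ φ)
      (schwartzGradient φ))

theorem energyDensity_apply (l : ℝ) (φ : 𝓢(E, ℝ)) (x : E) :
    energyDensity l φ x = (l * φ x ^ 2 + ‖schwartzGradient φ x‖ ^ 2) / 2 := by
  have gradient_sq : fderiv ℝ φ x (schwartzGradient φ x) = ‖schwartzGradient φ x‖ ^ 2 := by
    rw [← inner_schwartzGradient, real_inner_self_eq_norm_sq]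
  simp only [energyDensity, add_apply, smul_apply, SchwartzMap.pairing_apply_apply,
    ContinuousLinearMap.mul_apply', smul_eq_mul, SchwartzMap.fderivCLM_apply,
    ContinuousLinearMap.id_apply, gradient_sq]
  ring

/-- The stress tensor `e Id - ∇φ ⊗ ∇φ` of a potential `φ`, where `e` is its energy density. -/
noncomputable def stressTensor (l : ℝ) (φ : 𝓢(E, ℝ)) : 𝓢(E, E →L[ℝ] E) :=
  (energyDensity l φ).postcompCLM
      (ContinuousLinearMap.toSpanSingleton ℝ (ContinuousLinearMap.id ℝ E)) -
    SchwartzMap.pairing (ContinuousLinearMap.smulRightL ℝ E E) (SchwartzMap.fderivCLM ℝ E ℝ φ)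
      (schwartzGradient φ)

theorem stressTensor_apply (l : ℝ) (φ : 𝓢(E, ℝ)) (x w : E) :
    stressTensor l φ x w =
      energyDensity l φ x • w - ⟪schwartzGradient φ x, w⟫ • schwartzGradient φ x := by
  rw [inner_schwartzGradient]
  simp [stressTensor, SchwartzMap.postcompCLM_apply]

theorem fderiv_energyDensity (l : ℝ) (φ : 𝓢(E, ℝ)) (x w : E) :
    fderiv ℝ (energyDensity l φ) x w = l * φ x * ⟪schwartzGradient φ x, w⟫ +
      ⟪schwartzGradient φ x, fderiv ℝ (schwartzGradient φ) x w⟫ := by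
  have hφ := (φ.hasFDerivAt x).pow 2
  have hG := ((schwartzGradient φ).hasFDerivAt x).norm_sq
  have he := ((hφ.const_mul l).fun_add hG).mul_const (1 / 2)
  rw [show ⇑(energyDensity l φ) = _ from funext fun y => by
    rw [energyDensity_apply, div_eq_mul_one_div], HasFDerivAt.fderiv he, inner_schwartzGradient]
  simp only [nsmul_eq_mul, Nat.cast_ofNat, Nat.add_one_sub_one, pow_one, add_apply, smul_apply,
    smul_eq_mul, ContinuousLinearMap.comp_apply, coe_innerSL_apply]
  ring

theorem divergence_stressTensor (l : ℝ) (φ : 𝓢(E, ℝ)) {v : E → E} {x : E}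
    (hv : DifferentiableAt ℝ v x) :
    divergence (fun y => stressTensor l φ y (v y)) x =
      (l * φ x - Δ φ x) * fderiv ℝ φ x (v x) + energyDensity l φ x * divergence v x -
        ⟪schwartzGradient φ x, fderiv ℝ v x (schwartzGradient φ x)⟫ := by
  let G := schwartzGradient φ
  have hG : DifferentiableAt ℝ G x := G.differentiableAt
  have he : DifferentiableAt ℝ (energyDensity l φ) x := (energyDensity l φ).differentiableAt
  simp only [stressTensor_apply]
  rw [divergence_sub (he.fun_smul hv) ((hG.inner ℝ hv).fun_smul hG), divergence_smul he hv,
    divergence_smul (hG.inner ℝ hv) hG, fderiv_inner_apply ℝ hG hv, fderiv_energyDensity,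
    divergence_schwartzGradient, ← inner_schwartzGradient, fderiv_schwartzGradient_symm φ x (G x),
    real_inner_comm (G x)]
  ring

variable {F : Type*} [NormedAddCommGroup F] [NormedSpace ℝ F]

omit [FiniteDimensional ℝ E] in
theorem norm_le_of_norm_fderiv_le {v : E → F} {L : ℝ} (hv : Differentiable ℝ v)
    (hL : ∀ x, ‖fderiv ℝ v x‖ ≤ L) (x : E) : ‖v x‖ ≤ ‖v 0‖ + L * ‖x‖ := by
  have h := convex_univ.norm_image_sub_le_of_norm_fderiv_le (fun y _ => hv y) (fun y _ => hL y)
    (Set.mem_univ 0) (Set.mem_univ x)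
  rw [sub_zero] at h
  linarith [norm_le_insert' (v x) (v 0)]

variable {G : Type*} [NormedAddCommGroup G] [NormedSpace ℝ G]
  [MeasurableSpace E] [BorelSpace E]

theorem integrable_schwartzMap_clm_apply (S : 𝓢(E, F →L[ℝ] G)) {v : E → F} {a b : ℝ}
    (hv : AEStronglyMeasurable v) (hab : ∀ x, ‖v x‖ ≤ a + b * ‖x‖) :
    Integrable fun x => S x (v x) := by
  have dominating : Integrable fun x => a * ‖S x‖ + b * (‖x‖ ^ 1 * ‖S x‖) :=
    (S.integrable.norm.const_mul a).add ((S.integrable_pow_mul volume 1).const_mul b)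
  refine dominating.mono' ((ContinuousLinearMap.id ℝ (F →L[ℝ] G)).aestronglyMeasurable_comp₂
    S.continuous.aestronglyMeasurable hv) (.of_forall fun x => ?_)
  calc ‖S x (v x)‖ ≤ ‖S x‖ * ‖v x‖ := (S x).le_opNorm _
    _ ≤ ‖S x‖ * (a + b * ‖x‖) := by gcongr; exact hab x
    _ = a * ‖S x‖ + b * (‖x‖ ^ 1 * ‖S x‖) := by ring

theorem integrable_fderiv_schwartzMap_clm_apply [FiniteDimensional ℝ F] (S : 𝓢(E, F →L[ℝ] G))
    {v : E → F} {L : ℝ} (hv : Differentiable ℝ v) (hL : ∀ x, ‖fderiv ℝ v x‖ ≤ L) :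
    Integrable (fderiv ℝ fun x => S x (v x)) := by
  borelize F (E →L[ℝ] F)
  let S₁ : 𝓢(E, (E →L[ℝ] F) →L[ℝ] E →L[ℝ] G) :=
    SchwartzMap.postcompCLM (𝕜 := ℝ) (ContinuousLinearMap.compL ℝ E F G) S
  let S₂ : 𝓢(E, F →L[ℝ] E →L[ℝ] G) := SchwartzMap.postcompCLM (𝕜 := ℝ)
    (ContinuousLinearMap.flipₗᵢ ℝ E F G : (E →L[ℝ] F →L[ℝ] G) →L[ℝ] F →L[ℝ] E →L[ℝ] G)
    (SchwartzMap.fderivCLM ℝ E (F →L[ℝ] G) S)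
  have leibniz : (fderiv ℝ fun x => S x (v x)) = fun x => S₁ x (fderiv ℝ v x) + S₂ x (v x) :=
    funext fun x => fderiv_clm_apply S.differentiableAt (hv x)
  rw [leibniz]
  refine Integrable.add (integrable_schwartzMap_clm_apply S₁ (a := L) (b := 0) ?_ ?_)
    (integrable_schwartzMap_clm_apply S₂ hv.continuous.aestronglyMeasurable
      (norm_le_of_norm_fderiv_le hv hL))
  · exact (measurable_fderiv ℝ v).aestronglyMeasurable
  · simpa using hL

theorem integral_divergence_stressTensor (l : ℝ) (φ : 𝓢(E, ℝ)) {v : E → E} {L : ℝ}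
    (hv : Differentiable ℝ v) (hL : ∀ x, ‖fderiv ℝ v x‖ ≤ L) :
    ∫ x, divergence (fun y => stressTensor l φ y (v y)) x = 0 :=
  integral_divergence_eq_zero
    (fun x => (stressTensor l φ).differentiableAt.clm_apply (hv x))
    (integrable_schwartzMap_clm_apply _ hv.continuous.aestronglyMeasurable
      (norm_le_of_norm_fderiv_le hv hL))
    (integrable_fderiv_schwartzMap_clm_apply _ hv hL)

theorem integral_mul_self_eq_integral_energyDensity (l : ℝ) (φ : 𝓢(E, ℝ)) :
    ∫ x, (l * φ x - Δ φ x) * φ x = ∫ x, 2 * energyDensity l φ x := by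
  let N : 𝓢(E, E) := SchwartzMap.pairing (ContinuousLinearMap.lsmul ℝ ℝ) φ (schwartzGradient φ)
  have flux_zero : ∫ x, divergence N x = 0 := integral_divergence_eq_zero N.differentiable
    N.integrable (SchwartzMap.fderivCLM ℝ E E N).integrable
  have divergence_flux : ∀ x, divergence N x =
      2 * energyDensity l φ x - (l * φ x - Δ φ x) * φ x := fun x => by
    have h := divergence_smul φ.differentiableAt (schwartzGradient φ).differentiableAt (x := x)
    rw [divergence_schwartzGradient, ← inner_schwartzGradient, real_inner_self_eq_norm_sq] at h
    rw [energyDensity_apply, show divergence N x = _ from h]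
    ring
  have source_integrable : Integrable fun x => (l * φ x - Δ φ x) * φ x :=
    (SchwartzMap.pairing (ContinuousLinearMap.mul ℝ ℝ) (l • φ - Δ φ) φ).integrable
  simp only [divergence_flux] at flux_zero
  rw [integral_sub ((energyDensity l φ).integrable.const_mul 2) source_integrable] at flux_zero
  linarith

omit [MeasurableSpace E] [BorelSpace E] in
theorem stress_production_le {l L : ℝ} (hl : 0 ≤ l) (φ : 𝓢(E, ℝ)) {v : E → E} {x : E}
    (hL : ‖fderiv ℝ v x‖ ≤ L) :
    ⟪schwartzGradient φ x, fderiv ℝ v x (schwartzGradient φ x)⟫ -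
        energyDensity l φ x * divergence v x ≤
      (finrank ℝ E / 2 + 1) * L * (2 * energyDensity l φ x) := by
  let G := schwartzGradient φ x
  have energy_nonneg : 0 ≤ energyDensity l φ x := by rw [energyDensity_apply]; positivity
  have gradient_le : ‖G‖ ^ 2 ≤ 2 * energyDensity l φ x := by
    rw [energyDensity_apply]
    linarith [show 0 ≤ l * φ x ^ 2 by positivity]
  have inner_le : ⟪G, fderiv ℝ v x G⟫ ≤ L * (2 * energyDensity l φ x) :=
    calc ⟪G, fderiv ℝ v x G⟫ ≤ ‖G‖ * ‖fderiv ℝ v x G‖ := real_inner_le_norm _ _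
      _ ≤ ‖G‖ * (L * ‖G‖) := by gcongr; exact (fderiv ℝ v x).le_of_opNorm_le hL G
      _ = L * ‖G‖ ^ 2 := by ring
      _ ≤ L * (2 * energyDensity l φ x) := by
        gcongr; exact (norm_nonneg _).trans hL
  have divergence_le : |divergence v x| ≤ finrank ℝ E * L :=
    (abs_trace_le _).trans (by gcongr)
  nlinarith [neg_abs_le (divergence v x)]

theorem integral_resolvent_commutator_le {l L C : ℝ} (hl : 0 ≤ l) (φ : 𝓢(E, ℝ)) {v : E → E}
    (hv : Differentiable ℝ v) (hL : ∀ x, ‖fderiv ℝ v x‖ ≤ L)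
    (hC : (finrank ℝ E / 2 + 1) * L ≤ C) :
    ∫ x, (l * φ x - Δ φ x) * fderiv ℝ φ x (v x) ≤ C * ∫ x, (l * φ x - Δ φ x) * φ x := by
  let source : 𝓢(E, ℝ) := l • φ - Δ φ
  have source_integrable : Integrable fun x => (l * φ x - Δ φ x) * fderiv ℝ φ x (v x) :=
    integrable_schwartzMap_clm_apply (SchwartzMap.pairing (ContinuousLinearMap.lsmul ℝ ℝ) source
      (SchwartzMap.fderivCLM ℝ E ℝ φ)) hv.continuous.aestronglyMeasurable
      (norm_le_of_norm_fderiv_le hv hL)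
  have divergence_integrable :
      Integrable fun x => divergence (fun y => stressTensor l φ y (v y)) x :=
    (traceCLM E).integrable_comp (integrable_fderiv_schwartzMap_clm_apply _ hv hL)
  have energy_integrable := (energyDensity l φ).integrable (μ := volume)
  have pointwise : ∀ x, (l * φ x - Δ φ x) * fderiv ℝ φ x (v x) -
        divergence (fun y => stressTensor l φ y (v y)) x ≤
      C * (2 * energyDensity l φ x) := fun x => by
    have energy_nonneg : 0 ≤ 2 * energyDensity l φ x := by rw [energyDensity_apply]; positivity
    rw [divergence_stressTensor l φ (hv x)]
    linarith [stress_production_le hl φ (hL x), mul_le_mul_of_nonneg_right hC energy_nonneg]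
  calc ∫ x, (l * φ x - Δ φ x) * fderiv ℝ φ x (v x)
      = ∫ x, ((l * φ x - Δ φ x) * fderiv ℝ φ x (v x) -
          divergence (fun y => stressTensor l φ y (v y)) x) := by
        rw [integral_sub source_integrable divergence_integrable,
          integral_divergence_stressTensor l φ hv hL, sub_zero]
    _ ≤ ∫ x, C * (2 * energyDensity l φ x) := integral_mono
        (source_integrable.sub divergence_integrable) ((energy_integrable.const_mul 2).const_mul C)
        pointwise
    _ = C * ∫ x, (l * φ x - Δ φ x) * φ x := by
        rw [integral_const_mul, integral_mul_self_eq_integral_energyDensity]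

end StressTensor

section Subordination

open Set

variable {E : Type*} [NormedAddCommGroup E] [InnerProductSpace ℝ E]

/-- The heat kernel of `∂ₜ - Δ`; only times `t > 0` are meaningful. -/
noncomputable def heatKernel (t : ℝ) (z : E) : ℝ :=
  (4 * π * t) ^ (-((finrank ℝ E : ℝ) / 2)) * exp (-(‖z‖ ^ 2 / (4 * t)))

/-- The superposition `∫₀^∞ w(t) hₜ dt` of heat kernels; it is `0` at the points where the
integral diverges. -/
noncomputable def subordinateKernel (w : ℝ → ℝ) (z : E) : ℝ :=
  ∫ t in Ioi 0, w t * heatKernel t z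

/-- The Riesz kernel `c |z|^(2α - n)` in dimension `n`. -/
noncomputable def rieszKernel (c α : ℝ) (z : E) : ℝ := c * ‖z‖ ^ (2 * α - finrank ℝ E)

theorem even_rieszKernel (c α : ℝ) : Function.Even (rieszKernel (E := E) c α) := fun z => by
  rw [rieszKernel, norm_neg, rieszKernel]

theorem heatKernel_nonneg {t : ℝ} (ht : 0 ≤ t) (z : E) : 0 ≤ heatKernel t z := by
  unfold heatKernel
  positivity

theorem subordinateKernel_nonneg {w : ℝ → ℝ} (hw : ∀ t ∈ Ioi 0, 0 ≤ w t) (z : E) :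
    0 ≤ subordinateKernel w z :=
  setIntegral_nonneg measurableSet_Ioi fun t ht =>
    mul_nonneg (hw t ht) (heatKernel_nonneg (mem_Ioi.1 ht).le z)

theorem subordinateKernel_rpow {α : ℝ} (hα : 2 * α < finrank ℝ E) {z : E} (hz : z ≠ 0) :
    subordinateKernel (fun t => t ^ (α - 1)) z =
      rieszKernel (π ^ (-((finrank ℝ E : ℝ) / 2)) * 4 ^ (-α) * Gamma (finrank ℝ E / 2 - α)) α
        z := by
  rw [rieszKernel]
  set n := (finrank ℝ E : ℝ) with hn
  have hz' : 0 < ‖z‖ := norm_pos_iff.2 hz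
  have inversion : ∀ s ∈ Ioi (0 : ℝ),
      (|(-1 : ℝ)| * s ^ ((-1 : ℝ) - 1)) •
          ((s ^ (-1 : ℝ)) ^ (α - 1) * heatKernel (s ^ (-1 : ℝ)) z) =
        (4 * π) ^ (-(n / 2)) * (s ^ (n / 2 - α - 1) * exp (-(‖z‖ ^ 2 / 4 * s))) := fun s hs => by
    have hs : 0 < s := hs
    have exponent : ‖z‖ ^ 2 / (4 * s ^ (-1 : ℝ)) = ‖z‖ ^ 2 / 4 * s := by
      rw [rpow_neg_one]
      field_simp
    have power : s ^ (n / 2 - α - 1) =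
        s ^ ((-1 : ℝ) - 1) * s ^ (-1 * (α - 1)) * s ^ (-1 * -(n / 2)) := by
      rw [← rpow_add hs, ← rpow_add hs]
      ring_nf
    rw [heatKernel, ← hn, mul_rpow (by positivity) (by positivity), ← rpow_mul hs.le,
      ← rpow_mul hs.le, exponent, power, abs_neg, abs_one, one_mul, smul_eq_mul]
    ring
  have four_pow : (4 : ℝ) ^ (-α) = 4 ^ (-(n / 2)) * 4 ^ (n / 2 - α) := by
    rw [← rpow_add (by norm_num)]
    ring_nf
  have norm_pow : ‖z‖ ^ (2 * α - n) = ((‖z‖ ^ 2) ^ (n / 2 - α))⁻¹ := by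
    rw [← rpow_natCast, ← rpow_mul hz'.le, ← rpow_neg hz'.le]
    push_cast
    ring_nf
  rw [subordinateKernel, ← integral_comp_rpow_Ioi _ (p := -1) (by norm_num),
    setIntegral_congr_fun measurableSet_Ioi inversion, integral_const_mul,
    integral_rpow_mul_exp_neg_mul_Ioi (by linarith) (by positivity), one_div_div,
    div_rpow (by positivity) (by positivity), mul_rpow (by positivity) (by positivity), four_pow,
    norm_pow]
  ring

theorem integrableOn_rpow_mul_heatKernel {α : ℝ} (hα : 2 * α < finrank ℝ E) {z : E}
    (hz : z ≠ 0) : IntegrableOn (fun t => t ^ (α - 1) * heatKernel t z) (Ioi 0) := by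
  refine .of_integral_ne_zero ?_
  have Gamma_pos : 0 < Gamma (finrank ℝ E / 2 - α) := Gamma_pos_of_pos (by linarith)
  rw [← subordinateKernel.eq_def (fun t => t ^ (α - 1)), subordinateKernel_rpow hα hz, rieszKernel]
  positivity

variable [FiniteDimensional ℝ E] [MeasurableSpace E] [BorelSpace E]

omit [FiniteDimensional ℝ E] in
theorem measurable_heatKernel : Measurable fun q : ℝ × E => heatKernel q.1 q.2 := by
  unfold heatKernel
  fun_prop

theorem integral_heatKernel {t : ℝ} (ht : 0 < t) : ∫ z : E, heatKernel t z = 1 := by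
  have gaussian := GaussianFourier.integral_rexp_neg_mul_sq_norm (V := E)
    (b := 1 / (4 * t)) (by positivity)
  have exponent : ∀ z : E, -(‖z‖ ^ 2 / (4 * t)) = -(1 / (4 * t)) * ‖z‖ ^ 2 := fun z => by ring
  simp only [heatKernel, exponent]
  rw [integral_const_mul, gaussian, div_div_eq_mul_div, div_one, mul_left_comm, ← mul_assoc,
    ← rpow_add (by positivity), neg_add_cancel, rpow_zero]

theorem integrable_heatKernel {t : ℝ} (ht : 0 < t) : Integrable (heatKernel (E := E) t) :=
  .of_integral_ne_zero (by simp [integral_heatKernel ht])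

/- Fubini in the time and space variables; positivity of the heat kernels makes integrability
against the superposition the only requirement. -/
theorem integrable_subordination {X : Type*} [MeasureSpace X] [SigmaFinite (volume : Measure X)]
    {δ : X → E} (hδ : Measure.QuasiMeasurePreserving δ) {w : ℝ → ℝ} (hw : Measurable w)
    (hw0 : ∀ t ∈ Ioi 0, 0 ≤ w t)
    (hint : ∀ᵐ z : E, IntegrableOn (fun t => w t * heatKernel t z) (Ioi 0))
    {F : Type*} [NormedAddCommGroup F] [NormedSpace ℝ F] {g : X → F} (hg : AEStronglyMeasurable g)
    (hκg : Integrable fun p => subordinateKernel w (δ p) • g p) :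
    Integrable (fun q : ℝ × X => (w q.1 * heatKernel q.1 (δ q.2)) • g q.2)
      ((volume.restrict (Ioi 0)).prod volume) := by
  have measurable_weight : Measurable fun q : ℝ × X => w q.1 * heatKernel q.1 (δ q.2) :=
    (hw.comp measurable_fst).mul (measurable_heatKernel.comp (f := fun q : ℝ × X => (q.1, δ q.2))
      (measurable_fst.prodMk (hδ.measurable.comp measurable_snd)))
  have measurable_integrand : AEStronglyMeasurable
      (fun q : ℝ × X => (w q.1 * heatKernel q.1 (δ q.2)) • g q.2)
      ((volume.restrict (Ioi 0)).prod volume) :=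
    measurable_weight.aestronglyMeasurable.smul hg.comp_snd
  rw [integrable_prod_iff' measurable_integrand]
  refine ⟨(hδ.ae hint).mono fun p hp => hp.smul_const (g p),
    hκg.norm.congr (.of_forall fun p => ?_)⟩
  have norm_eq : ∀ t ∈ Ioi (0 : ℝ), ‖(w t * heatKernel t (δ p)) • g p‖ =
      w t * heatKernel t (δ p) * ‖g p‖ := fun t ht => by
    rw [norm_smul, norm_of_nonneg (mul_nonneg (hw0 t ht) (heatKernel_nonneg (mem_Ioi.1 ht).le _))]
  beta_reduce
  rw [setIntegral_congr_fun measurableSet_Ioi norm_eq, integral_mul_const, norm_smul,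
    norm_of_nonneg (subordinateKernel_nonneg hw0 _), subordinateKernel]

theorem subordination {X : Type*} [MeasureSpace X] [SigmaFinite (volume : Measure X)]
    {δ : X → E} (hδ : Measure.QuasiMeasurePreserving δ) {w : ℝ → ℝ} (hw : Measurable w)
    (hw0 : ∀ t ∈ Ioi 0, 0 ≤ w t)
    (hint : ∀ᵐ z : E, IntegrableOn (fun t => w t * heatKernel t z) (Ioi 0))
    {F : Type*} [NormedAddCommGroup F] [NormedSpace ℝ F] [CompleteSpace F]
    {g : X → F} (hg : AEStronglyMeasurable g)
    (hκg : Integrable fun p => subordinateKernel w (δ p) • g p) :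
    IntegrableOn (fun t => w t • ∫ p, heatKernel t (δ p) • g p) (Ioi 0) ∧
      ∫ t in Ioi 0, w t • ∫ p, heatKernel t (δ p) • g p =
        ∫ p, subordinateKernel w (δ p) • g p := by
  have joint := integrable_subordination hδ hw hw0 hint hg hκg
  simp only [← integral_smul, smul_smul]
  refine ⟨joint.integral_prod_left, ?_⟩
  rw [integral_integral_swap (f := fun t p => (w t * heatKernel t (δ p)) • g p) joint]
  exact integral_congr_ae (.of_forall fun p => integral_smul_const _ _)

end Subordination

section Yukawa

open Set
open scoped SchwartzMap FourierTransform Laplacian LineDeriv Convolution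

variable {E : Type*} [NormedAddCommGroup E] [InnerProductSpace ℝ E] [FiniteDimensional ℝ E]
  [MeasurableSpace E] [BorelSpace E]

/-- The Yukawa kernel: the fundamental solution of `l - Δ`, as a superposition of heat kernels. -/
noncomputable def yukawaKernel (l : ℝ) : E → ℝ := subordinateKernel fun t => exp (-(l * t))

theorem integrable_exp_mul_heatKernel {l : ℝ} (hl : 0 < l) :
    Integrable (fun q : ℝ × E => exp (-(l * q.1)) * heatKernel q.1 q.2)
      ((volume.restrict (Ioi 0)).prod volume) := by
  have measurable_integrand : Measurable fun q : ℝ × E => exp (-(l * q.1)) * heatKernel q.1 q.2 :=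
    (by fun_prop : Measurable fun q : ℝ × E => exp (-(l * q.1))).mul measurable_heatKernel
  refine (integrable_prod_iff measurable_integrand.aestronglyMeasurable).2 ⟨?_, ?_⟩
  · exact (ae_restrict_mem measurableSet_Ioi).mono fun t ht =>
      (integrable_heatKernel ht).const_mul (exp (-(l * t)))
  · refine (exp_neg_integrableOn_Ioi 0 hl).congr_fun (fun t ht => ?_) measurableSet_Ioi
    have norm_eq : ∀ z : E, ‖exp (-(l * t)) * heatKernel t z‖ = exp (-(l * t)) * heatKernel t z :=
      fun z => norm_of_nonneg (mul_nonneg (exp_pos _).le (heatKernel_nonneg (mem_Ioi.1 ht).le z))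
    simp only [norm_eq, integral_const_mul, integral_heatKernel ht, mul_one, neg_mul]

theorem ae_integrableOn_exp_mul_heatKernel {l : ℝ} (hl : 0 < l) :
    ∀ᵐ z : E, IntegrableOn (fun t => exp (-(l * t)) * heatKernel t z) (Ioi 0) :=
  (integrable_exp_mul_heatKernel hl).prod_left_ae

theorem integrable_yukawaKernel {l : ℝ} (hl : 0 < l) : Integrable (yukawaKernel (E := E) l) :=
  (integrable_exp_mul_heatKernel hl).integral_prod_right

theorem fourier_heatKernel {t : ℝ} (ht : 0 < t) (ξ : E) :
    𝓕 (fun z : E => (heatKernel t z : ℂ)) ξ = exp (-((2 * π) ^ 2 * ‖ξ‖ ^ 2 * t)) := by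
  let b : ℂ := (1 / (4 * t) : ℝ)
  have gaussian := fourier_gaussian_innerProductSpace (b := b)
    (by simp only [b, Complex.ofReal_re]; positivity) ξ
  have heatKernel_eq : (fun z : E => (heatKernel t z : ℂ)) = fun z =>
      ((4 * π * t) ^ (-((finrank ℝ E : ℝ) / 2)) : ℝ) • Complex.exp (-b * ‖z‖ ^ 2) := by
    funext z
    simp only [heatKernel, b, Complex.ofReal_mul, Complex.ofReal_exp, Complex.real_smul]
    push_cast
    ring_nf
  have normalization : ((4 * π * t) ^ (-((finrank ℝ E : ℝ) / 2)) : ℝ) *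
      ((π : ℂ) / b) ^ (finrank ℝ E / 2 : ℂ) = 1 := by
    have base : (π : ℂ) / b = (4 * π * t : ℝ) := by
      simp only [b]
      push_cast
      field_simp
    rw [base, show (finrank ℝ E / 2 : ℂ) = ((finrank ℝ E / 2 : ℝ) : ℂ) by push_cast; rfl,
      ← Complex.ofReal_cpow (by positivity), ← Complex.ofReal_mul, ← rpow_add (by positivity),
      neg_add_cancel, rpow_zero, Complex.ofReal_one]
  have exponent : -(π : ℂ) ^ 2 * ‖ξ‖ ^ 2 / b = (-((2 * π) ^ 2 * ‖ξ‖ ^ 2 * t) : ℝ) := by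
    simp only [b]
    push_cast
    field_simp
    ring
  rw [heatKernel_eq, Real.fourier_eq]
  simp only [smul_comm _ ((4 * π * t) ^ (-((finrank ℝ E : ℝ) / 2)) : ℝ)]
  rw [integral_smul, ← Real.fourier_eq, gaussian, Complex.real_smul, ← mul_assoc, normalization,
    one_mul, exponent, Complex.ofReal_exp]

theorem fourier_yukawaKernel {l : ℝ} (hl : 0 < l) (ξ : E) :
    𝓕 (fun z : E => (yukawaKernel l z : ℂ)) ξ = ((l + (2 * π) ^ 2 * ‖ξ‖ ^ 2)⁻¹ : ℝ) := by
  have plane_wave : Continuous fun z : E => ((𝐞 (-⟪z, ξ⟫) : Circle) : ℂ) := by fun_prop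
  have fourier_eq : ∀ κ : E → ℝ,
      𝓕 (fun z => (κ z : ℂ)) ξ = ∫ z, κ z • ((𝐞 (-⟪z, ξ⟫) : Circle) : ℂ) := fun κ => by
    simp only [Real.fourier_eq, Circle.smul_def, smul_eq_mul, Complex.real_smul, mul_comm]
  have superposition := (subordination (Measure.QuasiMeasurePreserving.id volume) (by fun_prop)
    (fun t _ => (exp_pos (-(l * t))).le) (ae_integrableOn_exp_mul_heatKernel hl)
    plane_wave.aestronglyMeasurable
    ((integrable_yukawaKernel hl).smul_bdd 1 plane_wave.aestronglyMeasurable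
      (.of_forall fun z => (Circle.norm_coe _).le))).2
  simp only [id_eq, ← fourier_eq] at superposition
  rw [yukawaKernel, ← superposition]
  have rate_neg : -(l + (2 * π) ^ 2 * ‖ξ‖ ^ 2) < 0 := by
    have : 0 ≤ (2 * π) ^ 2 * ‖ξ‖ ^ 2 := by positivity
    linarith
  have decay : ∀ t ∈ Ioi (0 : ℝ), exp (-(l * t)) • 𝓕 (fun z : E => (heatKernel t z : ℂ)) ξ =
      (exp (-(l + (2 * π) ^ 2 * ‖ξ‖ ^ 2) * t) : ℝ) := fun t ht => by
    rw [fourier_heatKernel ht, Complex.real_smul, ← Complex.ofReal_mul, ← exp_add]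
    ring_nf
  rw [setIntegral_congr_fun measurableSet_Ioi decay, integral_complex_ofReal,
    integral_exp_mul_Ioi rate_neg, mul_zero, exp_zero, neg_div_neg_eq, one_div]

omit [FiniteDimensional ℝ E] [MeasurableSpace E] [BorelSpace E] in
theorem hasTemperateGrowth_yukawa_symbol {l : ℝ} (hl : 0 < l) :
    (fun ξ : E => (l + (2 * π) ^ 2 * ‖ξ‖ ^ 2)⁻¹).HasTemperateGrowth := by
  have h := (Function.HasTemperateGrowth.const l⁻¹).mul
    ((Function.hasTemperateGrowth_one_add_norm_sq_rpow E (-1)).comp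
      ((2 * π / √l) • ContinuousLinearMap.id ℝ E).hasTemperateGrowth)
  suffices e : (fun ξ : E => (l + (2 * π) ^ 2 * ‖ξ‖ ^ 2)⁻¹) = _ by rw [e]; exact h
  funext ξ
  simp only [Pi.mul_apply, Function.comp_apply, smul_apply, ContinuousLinearMap.id_apply,
    norm_smul, mul_pow, div_pow, norm_div, norm_mul, norm_eq_abs, sq_abs]
  rw [sq_sqrt hl.le, rpow_neg_one, ← mul_inv]
  congr 1
  field_simp

theorem fourier_smul_sub_laplacian (l : ℝ) (ψ : 𝓢(E, ℂ)) (ξ : E) :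
    𝓕 (l • ψ - Δ ψ) ξ = (l + (2 * π) ^ 2 * ‖ξ‖ ^ 2) • 𝓕 ψ ξ := by
  rw [SchwartzMap.laplacian_eq_fourierMultiplierCLM, neg_smul, sub_neg_eq_add]
  simp only [FourierTransform.fourier_add, FourierTransform.fourier_smul,
    SchwartzMap.fourierMultiplierCLM_apply, FourierTransform.fourier_fourierInv_eq, add_apply,
    smul_apply]
  rw [SchwartzMap.smulLeftCLM_apply_apply (by fun_prop), smul_smul, ← add_smul]

omit [MeasurableSpace E] [BorelSpace E] in
theorem laplacian_postcompCLM {F G : Type*} [NormedAddCommGroup F] [NormedSpace ℝ F]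
    [NormedAddCommGroup G] [NormedSpace ℝ G] (T : F →L[ℝ] G) (ψ : 𝓢(E, F)) :
    Δ (ψ.postcompCLM T) = (Δ ψ).postcompCLM T := by
  have lineDeriv_postcomp : ∀ (w : E) (g : 𝓢(E, F)),
      ∂_{w} (g.postcompCLM T) = (∂_{w} g).postcompCLM T := fun w g => by
    ext x
    simp only [SchwartzMap.postcompCLM_apply, SchwartzMap.lineDerivOp_apply_eq_fderiv]
    exact congrArg (· w) (T.hasFDerivAt.comp x (g.hasFDerivAt x)).fderiv
  simp only [SchwartzMap.laplacian_eq_sum (stdOrthonormalBasis ℝ E), lineDeriv_postcomp, map_sum]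

theorem exists_resolvent_eq_convolution {l : ℝ} (hl : 0 < l) (f : 𝓢(E, ℂ)) :
    ∃ ψ : 𝓢(E, ℂ), l • ψ - Δ ψ = f ∧
      ⇑ψ = (fun z : E => (yukawaKernel l z : ℂ)) ⋆[ContinuousLinearMap.lsmul ℂ ℂ] f := by
  let symbol : E → ℝ := fun ξ => (l + (2 * π) ^ 2 * ‖ξ‖ ^ 2)⁻¹
  let Y : E → ℂ := fun z => (yukawaKernel l z : ℂ)
  let ψ : 𝓢(E, ℂ) := SchwartzMap.fourierMultiplierCLM ℂ symbol f
  have symbol_growth : symbol.HasTemperateGrowth := hasTemperateGrowth_yukawa_symbol hl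
  have fourier_ψ : ∀ ξ, 𝓕 ψ ξ = symbol ξ • 𝓕 f ξ := fun ξ => by
    simp only [ψ, SchwartzMap.fourierMultiplierCLM_apply, FourierTransform.fourier_fourierInv_eq,
      SchwartzMap.smulLeftCLM_apply_apply symbol_growth]
  have hY : Integrable Y := (integrable_yukawaKernel hl).ofReal
  refine ⟨ψ, (FourierTransform.fourierEquiv ℂ 𝓢(E, ℂ)).injective ?_, ?_⟩
  · ext ξ
    have : l + (2 * π) ^ 2 * ‖ξ‖ ^ 2 ≠ 0 := by positivity
    simp only [FourierTransform.fourierEquiv_apply]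
    rw [fourier_smul_sub_laplacian, fourier_ψ, smul_smul, mul_inv_cancel₀ this, one_smul]
  · have fourier_conv : 𝓕 (Y ⋆[ContinuousLinearMap.lsmul ℂ ℂ] f) = 𝓕 ψ := funext fun ξ => by
      rw [Real.fourier_smul_convolution_eq hY f.integrable, fourier_yukawaKernel hl, fourier_ψ,
        SchwartzMap.fourier_coe]
      simp [symbol]
    have conv_cont : Continuous (Y ⋆[ContinuousLinearMap.lsmul ℂ ℂ] f) :=
      BddAbove.continuous_convolution_right_of_integrable _
        ⟨SchwartzMap.seminorm ℝ 0 0 f, fun _ ⟨y, hy⟩ => hy ▸ SchwartzMap.norm_le_seminorm ℝ f y⟩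
        hY f.continuous
    rw [← conv_cont.fourierInv_fourier_eq (hY.integrable_convolution _ f.integrable)
      (fourier_conv ▸ (𝓕 ψ).integrable), fourier_conv, ← SchwartzMap.fourierInv_coe,
      FourierTransform.fourierInv_fourier_eq]

theorem exists_real_resolvent_eq_convolution {l : ℝ} (hl : 0 < l) (σ : 𝓢(E, ℝ)) :
    ∃ φ : 𝓢(E, ℝ), l • φ - Δ φ = σ ∧
      ⇑φ = yukawaKernel l ⋆[ContinuousLinearMap.lsmul ℝ ℝ] σ := by
  obtain ⟨ψ, resolvent, conv⟩ :=
    exists_resolvent_eq_convolution hl (σ.postcompCLM Complex.ofRealCLM)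
  refine ⟨ψ.postcompCLM Complex.reCLM, ?_, funext fun x => ?_⟩
  · rw [laplacian_postcompCLM, ← map_smul, ← map_sub, resolvent]
    ext x
    simp
  · simp only [SchwartzMap.postcompCLM_apply, conv, convolution_def,
      ContinuousLinearMap.lsmul_apply, smul_eq_mul, Complex.ofRealCLM_apply, Complex.reCLM_apply,
      ← Complex.ofReal_mul, integral_complex_ofReal, Complex.ofReal_re]

end Yukawa

section Potential

open Set
open scoped Convolution

theorem hasCompactSupport_mul_prod {X Y : Type*} [TopologicalSpace X] [R1Space X]
    [TopologicalSpace Y] [R1Space Y] {f : X → ℝ} {g : Y → ℝ} (hf : HasCompactSupport f)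
    (hg : HasCompactSupport g) : HasCompactSupport fun p : X × Y => f p.1 * g p.2 :=
  HasCompactSupport.intro (hf.isCompact.prod hg.isCompact) fun p hp => by
    rcases not_and_or.1 hp with h | h
    · rw [image_eq_zero_of_notMem_tsupport h, zero_mul]
    · rw [image_eq_zero_of_notMem_tsupport h, mul_zero]

variable {E : Type*} [NormedAddCommGroup E] [InnerProductSpace ℝ E]

/-- The density on `E × E` whose pairing with `κ (x - y)` measures the defect
`C ∫ σ (κ ⋆ σ) - ∫ σ v · ∇(κ ⋆ σ)` of the commutator estimate. -/
noncomputable def commutatorDensity (v : E → E) (C : ℝ) (σ : E → ℝ) (p : E × E) : ℝ :=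
  σ p.1 * (C * σ p.2 - fderiv ℝ σ p.2 (v p.1))

theorem continuous_commutatorDensity {v : E → E} (hv : Continuous v) (C : ℝ) {σ : E → ℝ}
    (hσ : ContDiff ℝ 1 σ) : Continuous (commutatorDensity v C σ) := by
  have := hσ.continuous
  have := hσ.continuous_fderiv one_ne_zero
  unfold commutatorDensity
  fun_prop

theorem commutatorDensity_eq_zero (v : E → E) (C : ℝ) {σ : E → ℝ} {p : E × E}
    (hp : p ∉ tsupport σ ×ˢ tsupport σ) : commutatorDensity v C σ p = 0 := by
  rcases not_and_or.1 hp with h | h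
  · rw [commutatorDensity, image_eq_zero_of_notMem_tsupport h, zero_mul]
  · rw [commutatorDensity, image_eq_zero_of_notMem_tsupport h, fderiv_of_notMem_tsupport ℝ h,
      mul_zero, zero_apply, sub_zero, mul_zero]

theorem hasCompactSupport_commutatorDensity (v : E → E) (C : ℝ) {σ : E → ℝ}
    (hσ : HasCompactSupport σ) : HasCompactSupport (commutatorDensity v C σ) :=
  HasCompactSupport.intro (hσ.isCompact.prod hσ.isCompact) fun _ =>
    commutatorDensity_eq_zero v C

variable [FiniteDimensional ℝ E] [MeasurableSpace E] [BorelSpace E]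

/-- The potential `κ ⋆ σ` generated by a density `σ` through an interaction kernel `κ`. -/
noncomputable def potential (κ σ : E → ℝ) (x : E) : ℝ :=
  ∫ y, κ (x - y) * σ y

theorem potential_eq_convolution (κ σ : E → ℝ) :
    potential κ σ = κ ⋆[ContinuousLinearMap.lsmul ℝ ℝ] σ :=
  funext fun x => by rw [convolution_lsmul_swap, potential]; rfl

theorem integrable_comp_sub_smul {F : Type*} [NormedAddCommGroup F] [NormedSpace ℝ F]
    {κ : E → ℝ} (hκ : LocallyIntegrable κ) {g : E → F} (hg : Continuous g)
    (hgc : HasCompactSupport g) (x : E) : Integrable fun y => κ (x - y) • g y :=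
  convolutionExistsAt_iff_integrable_swap.1
    (hgc.convolutionExists_right (ContinuousLinearMap.lsmul ℝ ℝ) hκ hg x)

theorem contDiff_potential {κ σ : E → ℝ} (hκ : LocallyIntegrable κ) (hσ : ContDiff ℝ 1 σ)
    (hσc : HasCompactSupport σ) : ContDiff ℝ 1 (potential κ σ) := by
  rw [potential_eq_convolution]
  exact hσc.contDiff_convolution_right _ hκ hσ

theorem fderiv_potential_apply {κ σ : E → ℝ} (hκ : LocallyIntegrable κ) (hσ : ContDiff ℝ 1 σ)
    (hσc : HasCompactSupport σ) (x w : E) :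
    fderiv ℝ (potential κ σ) x w = ∫ y, κ (x - y) * fderiv ℝ σ y w := by
  have derivative := hσc.hasFDerivAt_convolution_right (ContinuousLinearMap.lsmul ℝ ℝ) hκ hσ x
  have integrable := integrable_comp_sub_smul hκ (hσ.continuous_fderiv one_ne_zero)
    (hσc.fderiv ℝ) x
  rw [potential_eq_convolution, derivative.fderiv, convolution_eq_swap]
  exact ContinuousLinearMap.integral_apply integrable w

theorem locallyIntegrable_comp_sub {F : Type*} [NormedAddCommGroup F] [NormedSpace ℝ F]
    {κ : E → F} (hκ : LocallyIntegrable κ) :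
    LocallyIntegrable fun p : E × E => κ (p.1 - p.2) := by
  refine locallyIntegrable_iff.2 fun K hK => ?_
  have compact_snd := hK.image continuous_snd
  have compact_sub := hK.image (continuous_fst.sub continuous_snd)
  have cutoff : Integrable ((Prod.snd '' K).indicator fun _ : E => (1 : ℝ)) :=
    (integrable_indicator_iff compact_snd.measurableSet).2
      (integrableOn_const compact_snd.measure_lt_top.ne)
  have kernel := (integrable_indicator_iff compact_sub.measurableSet).2
    (hκ.integrableOn_isCompact compact_sub)
  have sub_mem : ∀ p ∈ K, p.1 - p.2 ∈ (Prod.fst - Prod.snd) '' K := fun p hp => ⟨p, hp, rfl⟩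
  refine (cutoff.convolution_integrand (ContinuousLinearMap.lsmul ℝ ℝ)
    kernel).integrableOn.congr_fun (fun p hp => ?_) hK.measurableSet
  beta_reduce
  rw [indicator_of_mem (mem_image_of_mem _ hp), indicator_of_mem (sub_mem p hp),
    ContinuousLinearMap.lsmul_apply, one_smul]

theorem integrable_comp_sub_mul {κ : E → ℝ} (hκ : LocallyIntegrable κ) {g : E × E → ℝ}
    (hg : Continuous g) (hgc : HasCompactSupport g) :
    Integrable fun p : E × E => κ (p.1 - p.2) * g p :=
  (locallyIntegrable_comp_sub hκ).integrable_smul_right_of_hasCompactSupport hg hgc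

theorem integrable_comp_sub_mul_mul {κ f g : E → ℝ} (hκ : LocallyIntegrable κ)
    (hf : Continuous f) (hfc : HasCompactSupport f) (hg : Continuous g)
    (hgc : HasCompactSupport g) :
    Integrable fun p : E × E => κ (p.1 - p.2) * (f p.1 * g p.2) :=
  integrable_comp_sub_mul hκ (by fun_prop) (hasCompactSupport_mul_prod hfc hgc)

theorem integral_comp_sub_mul_mul {κ f g : E → ℝ} (hκ : LocallyIntegrable κ) (hf : Continuous f)
    (hfc : HasCompactSupport f) (hg : Continuous g) (hgc : HasCompactSupport g) :
    ∫ p : E × E, κ (p.1 - p.2) * (f p.1 * g p.2) = ∫ x, f x * potential κ g x := by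
  rw [Measure.volume_eq_prod, integral_prod _ (integrable_comp_sub_mul_mul hκ hf hfc hg hgc)]
  simp only [potential, ← integral_const_mul, mul_left_comm]

theorem integral_comp_sub_mul_commutatorDensity {κ : E → ℝ} (hκ : LocallyIntegrable κ)
    {v : E → E} (hv : Continuous v) (C : ℝ) {σ : E → ℝ} (hσ : ContDiff ℝ 1 σ)
    (hσc : HasCompactSupport σ) :
    ∫ p : E × E, κ (p.1 - p.2) * commutatorDensity v C σ p =
      (C * ∫ x, σ x * potential κ σ x) - ∫ x, σ x * fderiv ℝ (potential κ σ) x (v x) := by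
  have potential_C1 := contDiff_potential hκ hσ hσc
  have := hσ.continuous
  have := potential_C1.continuous
  have := potential_C1.continuous_fderiv one_ne_zero
  have integrable := integrable_comp_sub_mul hκ (continuous_commutatorDensity hv C hσ)
    (hasCompactSupport_commutatorDensity v C hσc)
  have fiber : ∀ x, ∫ y, κ (x - y) * commutatorDensity v C σ (x, y) =
      C * (σ x * potential κ σ x) - σ x * fderiv ℝ (potential κ σ) x (v x) := fun x => by
    have i₁ := integrable_comp_sub_smul hκ hσ.continuous hσc x
    have i₂ := (integrable_comp_sub_smul hκ (hσ.continuous_fderiv one_ne_zero)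
      (hσc.fderiv ℝ) x).apply_continuousLinearMap (v x)
    rw [fderiv_potential_apply hκ hσ hσc, potential, ← mul_assoc, mul_comm C, mul_assoc,
      ← mul_sub, ← integral_const_mul C]
    refine .trans ?_ (congrArg (σ x * ·) (integral_sub (i₁.const_mul C) i₂))
    rw [← integral_const_mul]
    refine integral_congr_ae (.of_forall fun y => ?_)
    simp only [commutatorDensity]
    ring
  rw [Measure.volume_eq_prod, integral_prod _ integrable]
  simp only [fiber]
  rw [integral_sub, integral_const_mul]
  · exact (Continuous.integrable_of_hasCompactSupport (by fun_prop) hσc.mul_right).const_mul C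
  · exact Continuous.integrable_of_hasCompactSupport (by fun_prop) hσc.mul_right

theorem locallyIntegrable_rieszKernel (c : ℝ) {α : ℝ} (hα : 0 < α) :
    LocallyIntegrable (rieszKernel (E := E) c α) := by
  rcases subsingleton_or_nontrivial E
  · exact continuous_of_const (fun x y => by rw [Subsingleton.elim x y]) |>.locallyIntegrable
  refine LocallyIntegrable.smul (f := fun z : E => ‖z‖ ^ (2 * α - finrank ℝ E)) ?_ c
  refine locallyIntegrable_of_norm_le_rpow (C := 1) (α := finrank ℝ E - 2 * α)
    Module.finrank_pos (by linarith) (.of_forall fun x => ?_)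
    (measurable_norm.pow_const _).aestronglyMeasurable
  rw [norm_of_nonneg (by positivity), one_mul, neg_sub]

end Potential

section LaplaceTransform

open Set Filter

theorem integral_rpow_mul_exp_neg_mul {s t : ℝ} (hs : 0 < s) (ht : 0 < t) :
    ∫ l in Ioi 0, l ^ (s - 1) * exp (-(l * t)) = t ^ (-s) * Gamma s := by
  simp only [mul_comm _ t]
  rw [integral_rpow_mul_exp_neg_mul_Ioi hs ht, one_div, inv_rpow ht.le, rpow_neg ht.le]

theorem integrableOn_rpow_mul_exp_neg_mul {s t : ℝ} (hs : 0 < s) (ht : 0 < t) :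
    IntegrableOn (fun l => l ^ (s - 1) * exp (-(l * t))) (Ioi 0) := by
  refine .of_integral_ne_zero ?_
  have := Gamma_pos_of_pos hs
  rw [integral_rpow_mul_exp_neg_mul hs ht]
  positivity

variable {F : ℝ → ℝ}

theorem integral_nonneg_of_laplace_nonneg (hF : IntegrableOn F (Ioi 0))
    (hlaplace : ∀ l > 0, 0 ≤ ∫ t in Ioi 0, exp (-(l * t)) * F t) : 0 ≤ ∫ t in Ioi 0, F t := by
  have limit : Tendsto (fun l => ∫ t in Ioi 0, exp (-(l * t)) * F t) (nhdsWithin 0 (Ioi 0))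
      (nhds (∫ t in Ioi 0, F t)) := by
    refine tendsto_integral_filter_of_dominated_convergence (fun t => ‖F t‖)
      (.of_forall fun l => ?_) ?_ hF.norm (.of_forall fun t => ?_)
    · exact (by fun_prop : Continuous fun t => exp (-(l * t))).aestronglyMeasurable.mul
        hF.aestronglyMeasurable
    · filter_upwards [self_mem_nhdsWithin] with l hl
      filter_upwards [ae_restrict_mem measurableSet_Ioi] with t ht
      rw [norm_mul, norm_of_nonneg (exp_pos _).le]
      exact mul_le_of_le_one_left (norm_nonneg _)
        (exp_le_one_iff.2 (neg_nonpos.2 (mul_pos hl ht).le))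
    · have : Continuous fun l => exp (-(l * t)) * F t := by fun_prop
      simpa using (this.tendsto 0).mono_left nhdsWithin_le_nhds
  exact ge_of_tendsto limit (eventually_mem_nhdsWithin.mono hlaplace)

theorem integrable_rpow_mul_exp_mul {s : ℝ} (hs : 0 < s)
    (hF : IntegrableOn (fun t => t ^ (-s) * F t) (Ioi 0)) :
    Integrable (fun q : ℝ × ℝ => q.2 ^ (s - 1) * exp (-(q.2 * q.1)) * F q.1)
      ((volume.restrict (Ioi 0)).prod (volume.restrict (Ioi 0))) := by
  have measurable_F : AEStronglyMeasurable F (volume.restrict (Ioi 0)) := by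
    refine ((measurable_id.pow_const s).aestronglyMeasurable.mul
      hF.aestronglyMeasurable).congr ?_
    filter_upwards [ae_restrict_mem measurableSet_Ioi] with t ht
    simp only [Pi.mul_apply, id_eq]
    rw [← mul_assoc, ← rpow_add ht, add_neg_cancel, rpow_zero, one_mul]
  have measurable_kernel : Measurable fun q : ℝ × ℝ => q.2 ^ (s - 1) * exp (-(q.2 * q.1)) :=
    (measurable_snd.pow_const _).mul (by fun_prop)
  refine (integrable_prod_iff (measurable_kernel.aestronglyMeasurable.mul
    measurable_F.comp_fst)).2 ⟨?_, ?_⟩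
  · filter_upwards [ae_restrict_mem measurableSet_Ioi] with t ht
    exact (integrableOn_rpow_mul_exp_neg_mul hs ht).mul_const (F t)
  · refine IntegrableOn.congr_fun (hF.norm.const_mul (Gamma s)) (fun t ht => ?_) measurableSet_Ioi
    have norm_eq : ∀ l ∈ Ioi (0 : ℝ), ‖l ^ (s - 1) * exp (-(l * t)) * F t‖ =
        l ^ (s - 1) * exp (-(l * t)) * ‖F t‖ := fun l hl => by
      rw [norm_mul, norm_of_nonneg (mul_nonneg (rpow_nonneg (mem_Ioi.1 hl).le _) (exp_pos _).le)]
    simp only [Pi.mul_apply]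
    rw [setIntegral_congr_fun measurableSet_Ioi norm_eq, integral_mul_const,
      integral_rpow_mul_exp_neg_mul hs ht, norm_mul,
      norm_of_nonneg (rpow_nonneg (mem_Ioi.1 ht).le _)]
    ring

theorem integral_rpow_mul_nonneg_of_laplace_nonneg {s : ℝ} (hs : 0 ≤ s)
    (hF : IntegrableOn (fun t => t ^ (-s) * F t) (Ioi 0))
    (hlaplace : ∀ l > 0, 0 ≤ ∫ t in Ioi 0, exp (-(l * t)) * F t) :
    0 ≤ ∫ t in Ioi 0, t ^ (-s) * F t := by
  rcases hs.eq_or_lt with rfl | hs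
  · simp only [neg_zero, rpow_zero, one_mul] at hF ⊢
    exact integral_nonneg_of_laplace_nonneg hF hlaplace
  refine nonneg_of_mul_nonneg_right ?_ (Gamma_pos_of_pos hs)
  calc 0 ≤ ∫ l in Ioi 0, l ^ (s - 1) * ∫ t in Ioi 0, exp (-(l * t)) * F t :=
        setIntegral_nonneg measurableSet_Ioi fun l hl =>
          mul_nonneg (rpow_nonneg (mem_Ioi.1 hl).le _) (hlaplace l hl)
    _ = ∫ l in Ioi 0, ∫ t in Ioi 0, l ^ (s - 1) * exp (-(l * t)) * F t := by
        simp only [← integral_const_mul, mul_assoc]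
    _ = ∫ t in Ioi 0, ∫ l in Ioi 0, l ^ (s - 1) * exp (-(l * t)) * F t :=
        (integral_integral_swap (integrable_rpow_mul_exp_mul hs hF)).symm
    _ = Gamma s * ∫ t in Ioi 0, t ^ (-s) * F t := by
        rw [← integral_const_mul]
        refine setIntegral_congr_fun measurableSet_Ioi fun t ht => ?_
        rw [integral_mul_const, integral_rpow_mul_exp_neg_mul hs ht]
        ring

end LaplaceTransform

section Mollification

open Set Filter
open scoped Topology Convolution ContDiff Pointwise

/-- A bump function at the origin whose support shrinks with `k`. -/
noncomputable def shrinkingBump (E : Type*) [NormedAddCommGroup E] (k : ℕ) :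
    ContDiffBump (0 : E) where
  rIn := 1 / (k + 1) / 2
  rOut := 1 / (k + 1)
  rIn_pos := by positivity
  rIn_lt_rOut := half_lt_self (by positivity)

variable {E : Type*} [NormedAddCommGroup E] [InnerProductSpace ℝ E] [FiniteDimensional ℝ E]
  [MeasurableSpace E] [BorelSpace E]
  {F : Type*} [NormedAddCommGroup F] [NormedSpace ℝ F]

/-- The mollification of `g` at scale `1 / (k + 1)`. -/
noncomputable def mollify (g : E → F) (k : ℕ) : E → F :=
  (shrinkingBump E k).normed volume ⋆[ContinuousLinearMap.lsmul ℝ ℝ] g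

theorem tendsto_mollify [CompleteSpace F] {g : E → F} (hg : Continuous g) (x : E) :
    Tendsto (fun k => mollify g k x) atTop (𝓝 (g x)) :=
  ContDiffBump.convolution_tendsto_right_of_continuous tendsto_one_div_add_atTop_nhds_zero_nat hg x

theorem norm_mollify_le {g : E → F} {M : ℝ} (hM : ∀ x, ‖g x‖ ≤ M) (k : ℕ) (x : E) :
    ‖mollify g k x‖ ≤ M := by
  let φ := shrinkingBump E k
  calc ‖mollify g k x‖ ≤ ∫ y, φ.normed volume y * M :=
        norm_integral_le_of_norm_le (φ.integrable_normed.mul_const M) (.of_forall fun y => by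
          rw [ContinuousLinearMap.lsmul_apply, norm_smul, norm_of_nonneg (φ.nonneg_normed y)]
          exact mul_le_mul_of_nonneg_left (hM _) (φ.nonneg_normed y))
    _ = M := by rw [integral_mul_const, φ.integral_normed, one_mul]

theorem tsupport_mollify_subset {g : E → F} (hg : HasCompactSupport g) (k : ℕ) :
    tsupport (mollify g k) ⊆ Metric.closedBall (0 : E) 1 + tsupport g := by
  refine closure_minimal ((support_convolution_subset _).trans
    (add_subset_add ?_ (subset_tsupport g))) ((isCompact_closedBall 0 1).add hg.isCompact).isClosed
  rw [ContDiffBump.support_normed_eq]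
  refine Metric.ball_subset_closedBall.trans (Metric.closedBall_subset_closedBall ?_)
  exact (div_le_one (by positivity)).2 (by simp)

theorem contDiff_mollify {σ : E → ℝ} (hσ : Continuous σ) (k : ℕ) :
    ContDiff ℝ ∞ (mollify σ k) :=
  (shrinkingBump E k).hasCompactSupport_normed.contDiff_convolution_left _
    (shrinkingBump E k).contDiff_normed hσ.locallyIntegrable

theorem fderiv_mollify {σ : E → ℝ} (hσ : ContDiff ℝ 1 σ) (hσc : HasCompactSupport σ) (k : ℕ) :
    fderiv ℝ (mollify σ k) = mollify (fderiv ℝ σ) k :=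
  funext fun x => (hσc.hasFDerivAt_convolution_right (ContinuousLinearMap.lsmul ℝ ℝ)
    (shrinkingBump E k).continuous_normed.locallyIntegrable hσ x).fderiv

theorem tendsto_commutatorDensity_mollify (v : E → E) (C : ℝ) {σ : E → ℝ} (hσ : ContDiff ℝ 1 σ)
    (hσc : HasCompactSupport σ) (p : E × E) :
    Tendsto (fun k => commutatorDensity v C (mollify σ k) p) atTop
      (𝓝 (commutatorDensity v C σ p)) := by
  have derivative : Tendsto (fun k => fderiv ℝ (mollify σ k) p.2 (v p.1)) atTop
      (𝓝 (fderiv ℝ σ p.2 (v p.1))) := by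
    simp only [fderiv_mollify hσ hσc]
    exact ((ContinuousLinearMap.apply ℝ ℝ (v p.1)).continuous.tendsto _).comp
      (tendsto_mollify (hσ.continuous_fderiv one_ne_zero) p.2)
  exact (tendsto_mollify hσ.continuous p.1).mul
    (((tendsto_mollify hσ.continuous p.2).const_mul C).sub derivative)

theorem exists_norm_commutatorDensity_mollify_le {v : E → E} (hv : Continuous v) (C : ℝ)
    {σ : E → ℝ} (hσ : ContDiff ℝ 1 σ) (hσc : HasCompactSupport σ) {K : Set E} (hK : IsCompact K) :
    ∃ M, ∀ k, ∀ p ∈ K ×ˢ K, ‖commutatorDensity v C (mollify σ k) p‖ ≤ M := by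
  obtain ⟨S, hS⟩ := hσc.exists_bound_of_continuous hσ.continuous
  obtain ⟨D, hD⟩ := (hσc.fderiv ℝ).exists_bound_of_continuous (hσ.continuous_fderiv one_ne_zero)
  obtain ⟨V, hV⟩ := hK.exists_bound_of_continuousOn hv.continuousOn
  have S_nonneg : 0 ≤ S := (norm_nonneg _).trans (hS 0)
  refine ⟨S * (‖C‖ * S + D * V), fun k p hp => ?_⟩
  have derivative_le : ‖fderiv ℝ (mollify σ k) p.2 (v p.1)‖ ≤ D * V := by
    rw [fderiv_mollify hσ hσc]
    exact ContinuousLinearMap.le_of_opNorm_le_of_le _ (norm_mollify_le hD k _) (hV _ hp.1)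
  rw [commutatorDensity, norm_mul]
  gcongr
  · exact norm_mollify_le hS k _
  · refine (norm_sub_le _ _).trans (add_le_add ?_ derivative_le)
    rw [norm_mul]
    gcongr
    exact norm_mollify_le hS k _

theorem integral_comp_sub_mul_commutatorDensity_nonneg_of_smooth {κ : E → ℝ}
    (hκ : LocallyIntegrable κ) {v : E → E} (hv : Continuous v) (C : ℝ)
    (hsmooth : ∀ σ : E → ℝ, ContDiff ℝ ∞ σ → HasCompactSupport σ →
      0 ≤ ∫ p : E × E, κ (p.1 - p.2) * commutatorDensity v C σ p)
    {σ : E → ℝ} (hσ : ContDiff ℝ 1 σ) (hσc : HasCompactSupport σ) :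
    0 ≤ ∫ p : E × E, κ (p.1 - p.2) * commutatorDensity v C σ p := by
  let K : Set E := Metric.closedBall (0 : E) 1 + tsupport σ
  have hK : IsCompact K := (isCompact_closedBall 0 1).add hσc.isCompact
  have smooth : ∀ k, ContDiff ℝ ∞ (mollify σ k) := contDiff_mollify hσ.continuous
  have supported : ∀ k, tsupport (mollify σ k) ⊆ K := tsupport_mollify_subset hσc
  obtain ⟨M, hM⟩ := exists_norm_commutatorDensity_mollify_le hv C hσ hσc hK
  have kernel_integrable := (locallyIntegrable_comp_sub hκ).integrableOn_isCompact (hK.prod hK)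
  have limit : Tendsto
      (fun k => ∫ p : E × E, κ (p.1 - p.2) * commutatorDensity v C (mollify σ k) p) atTop
      (𝓝 (∫ p : E × E, κ (p.1 - p.2) * commutatorDensity v C σ p)) := by
    refine tendsto_integral_of_dominated_convergence
      ((K ×ˢ K).indicator fun p => ‖κ (p.1 - p.2)‖ * M) (fun k => ?_)
      ((integrable_indicator_iff (hK.prod hK).measurableSet).2 (kernel_integrable.norm.mul_const M))
      (fun k => .of_forall fun p => ?_)
      (.of_forall fun p => (tendsto_commutatorDensity_mollify v C hσ hσc p).const_mul _)
    · exact (locallyIntegrable_comp_sub hκ).aestronglyMeasurable.mul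
        (continuous_commutatorDensity hv C ((smooth k).of_le (by simp))).aestronglyMeasurable
    · by_cases hp : p ∈ K ×ˢ K
      · rw [indicator_of_mem hp, norm_mul]
        exact mul_le_mul_of_nonneg_left (hM k p hp) (norm_nonneg _)
      · rw [indicator_of_notMem hp, commutatorDensity_eq_zero v C fun h =>
          hp (prod_mono (supported k) (supported k) h), mul_zero, norm_zero]
  exact ge_of_tendsto' limit fun k =>
    hsmooth _ (smooth k) (hK.of_isClosed_subset (isClosed_tsupport _) (supported k))

end Mollification

section CommutatorEstimate

open Set
open scoped ContDiff SchwartzMap Laplacian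

variable {E : Type*} [NormedAddCommGroup E] [InnerProductSpace ℝ E] [FiniteDimensional ℝ E]
  [MeasurableSpace E] [BorelSpace E]
  {v : E → E} {L C : ℝ} {σ : E → ℝ}

theorem integral_yukawaKernel_mul_commutatorDensity_nonneg {l : ℝ} (hl : 0 < l)
    (hv : Differentiable ℝ v) (hL : ∀ x, ‖fderiv ℝ v x‖ ≤ L) (hC : (finrank ℝ E / 2 + 1) * L ≤ C)
    (hσ : ContDiff ℝ ∞ σ) (hσc : HasCompactSupport σ) :
    0 ≤ ∫ p : E × E, yukawaKernel l (p.1 - p.2) * commutatorDensity v C σ p := by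
  obtain ⟨φ, resolvent, potential_eq⟩ :=
    exists_real_resolvent_eq_convolution hl (hσc.toSchwartzMap hσ)
  replace resolvent : ∀ x, l * φ x - Δ φ x = σ x := fun x => congrArg (· x) resolvent
  replace potential_eq : potential (yukawaKernel l) σ = φ :=
    (potential_eq_convolution _ _).trans potential_eq.symm
  have commutator := integral_resolvent_commutator_le hl.le φ hv hL hC
  rw [integral_comp_sub_mul_commutatorDensity (integrable_yukawaKernel hl).locallyIntegrable
    hv.continuous C (hσ.of_le (by simp)) hσc, potential_eq]
  simpa only [resolvent, sub_nonneg] using commutator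

theorem subordinateKernel_rpow_ae_eq [Nontrivial E] {α : ℝ} (hα : 2 * α < finrank ℝ E) :
    subordinateKernel (E := E) (fun t => t ^ (α - 1)) =ᵐ[volume] rieszKernel
      (π ^ (-((finrank ℝ E : ℝ) / 2)) * 4 ^ (-α) * Gamma (finrank ℝ E / 2 - α)) α :=
  (Measure.ae_ne volume 0).mono fun _ => subordinateKernel_rpow hα

omit [FiniteDimensional ℝ E] [MeasurableSpace E] [BorelSpace E] in
theorem nontrivial_of_two_mul_lt_finrank {α : ℝ} (hα : 0 < α) (h2α : 2 * α < finrank ℝ E) :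
    Nontrivial E :=
  Module.nontrivial_of_finrank_pos (R := ℝ) (Nat.cast_pos.1 (by linarith : (0 : ℝ) < finrank ℝ E))

theorem integral_subordinateKernel_rpow_mul_commutatorDensity_nonneg {α : ℝ}
    (hα : α ∈ Ioc 0 1) (h2α : 2 * α < finrank ℝ E) (hv : Differentiable ℝ v)
    (hL : ∀ x, ‖fderiv ℝ v x‖ ≤ L) (hC : (finrank ℝ E / 2 + 1) * L ≤ C)
    (hσ : ContDiff ℝ ∞ σ) (hσc : HasCompactSupport σ) :
    0 ≤ ∫ p : E × E, subordinateKernel (fun t => t ^ (α - 1)) (p.1 - p.2) *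
      commutatorDensity v C σ p := by
  have := nontrivial_of_two_mul_lt_finrank hα.1 h2α
  have hδ : Measure.QuasiMeasurePreserving fun p : E × E => p.1 - p.2 :=
    quasiMeasurePreserving_sub_of_right_invariant volume volume
  have density_continuous := continuous_commutatorDensity hv.continuous C (hσ.of_le (by simp))
  have density_compact := hasCompactSupport_commutatorDensity v C hσc
  have riesz_locallyIntegrable :=
    (locallyIntegrable_rieszKernel _ hα.1).congr (subordinateKernel_rpow_ae_eq h2α).symm
  have riesz := subordination hδ (by fun_prop) (fun t ht => rpow_nonneg (mem_Ioi.1 ht).le (α - 1))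
    ((Measure.ae_ne volume 0).mono fun z => integrableOn_rpow_mul_heatKernel h2α)
    density_continuous.aestronglyMeasurable
    (integrable_comp_sub_mul riesz_locallyIntegrable density_continuous density_compact)
  have yukawa := fun {l : ℝ} (hl : 0 < l) =>
    (subordination hδ (by fun_prop) (fun t _ => (exp_pos (-(l * t))).le)
      (ae_integrableOn_exp_mul_heatKernel hl) density_continuous.aestronglyMeasurable
      (integrable_comp_sub_mul (integrable_yukawaKernel hl).locallyIntegrable density_continuous
        density_compact)).2
  rw [← neg_sub 1 α] at riesz ⊢
  refine (integral_rpow_mul_nonneg_of_laplace_nonneg (sub_nonneg.2 hα.2) riesz.1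
    fun l hl => ?_).trans_eq riesz.2
  exact (integral_yukawaKernel_mul_commutatorDensity_nonneg hl hv hL hC hσ hσc).trans_eq
    (yukawa hl).symm

theorem integral_rieszKernel_mul_commutatorDensity_nonneg {c α : ℝ} (hc : 0 ≤ c)
    (hα : α ∈ Ioc 0 1) (h2α : 2 * α < finrank ℝ E) (hv : Differentiable ℝ v)
    (hL : ∀ x, ‖fderiv ℝ v x‖ ≤ L) (hC : (finrank ℝ E / 2 + 1) * L ≤ C)
    (hσ : ContDiff ℝ ∞ σ) (hσc : HasCompactSupport σ) :
    0 ≤ ∫ p : E × E, rieszKernel c α (p.1 - p.2) * commutatorDensity v C σ p := by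
  have := nontrivial_of_two_mul_lt_finrank hα.1 h2α
  have hδ : Measure.QuasiMeasurePreserving fun p : E × E => p.1 - p.2 :=
    quasiMeasurePreserving_sub_of_right_invariant volume volume
  have ae_eq := hδ.ae_eq (subordinateKernel_rpow_ae_eq (E := E) h2α)
  set γ := π ^ (-((finrank ℝ E : ℝ) / 2)) * 4 ^ (-α) * Gamma (finrank ℝ E / 2 - α)
  have γ_pos : 0 < γ := mul_pos (by positivity) (Gamma_pos_of_pos (by linarith))
  have integral_eq : ∫ p : E × E, rieszKernel c α (p.1 - p.2) * commutatorDensity v C σ p =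
      c / γ * ∫ p : E × E, subordinateKernel (fun t => t ^ (α - 1)) (p.1 - p.2) *
        commutatorDensity v C σ p := by
    rw [← integral_const_mul]
    refine integral_congr_ae (ae_eq.mono fun p hp => ?_)
    simp only [Function.comp_apply] at hp
    simp only [hp, rieszKernel]
    field_simp
  rw [integral_eq]
  exact mul_nonneg (div_nonneg hc γ_pos.le)
    (integral_subordinateKernel_rpow_mul_commutatorDensity_nonneg hα h2α hv hL hC hσ hσc)

theorem integral_mul_fderiv_rieszPotential_le {c α : ℝ} (hc : 0 ≤ c) (hα : α ∈ Ioc 0 1)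
    (h2α : 2 * α < finrank ℝ E) (hv : Differentiable ℝ v) (hL : ∀ x, ‖fderiv ℝ v x‖ ≤ L)
    (hC : (finrank ℝ E / 2 + 1) * L ≤ C) (hσ : ContDiff ℝ 1 σ) (hσc : HasCompactSupport σ) :
    ∫ x, σ x * fderiv ℝ (potential (rieszKernel c α) σ) x (v x) ≤
      C * ∫ x, σ x * potential (rieszKernel c α) σ x := by
  have riesz := locallyIntegrable_rieszKernel (E := E) c hα.1
  have nonneg := integral_comp_sub_mul_commutatorDensity_nonneg_of_smooth riesz hv.continuous C
    (fun _ => integral_rieszKernel_mul_commutatorDensity_nonneg hc hα h2α hv hL hC) hσ hσc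
  rwa [integral_comp_sub_mul_commutatorDensity riesz hv.continuous C hσ hσc, sub_nonneg] at nonneg

end CommutatorEstimate

section Energy

open Set Topology

section TimeSlices

variable {X F : Type*} [NormedAddCommGroup X] [NormedSpace ℝ X] [NormedAddCommGroup F]
  [NormedSpace ℝ F] {I : Set ℝ} {g : ℝ → X → F}

theorem contDiff_slice (hg : ContDiffOn ℝ 1 (fun p : ℝ × X => g p.1 p.2) (I ×ˢ univ)) {t : ℝ}
    (ht : t ∈ I) : ContDiff ℝ 1 (g t) :=
  contDiffOn_univ.1 (hg.comp (f := fun x => (t, x)) (by fun_prop) fun _ _ => ⟨ht, trivial⟩)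

theorem hasDerivAt_slice (hg : ContDiffOn ℝ 1 (fun p : ℝ × X => g p.1 p.2) (I ×ˢ univ)) {t : ℝ}
    (ht : I ∈ 𝓝 t) (x : X) :
    HasDerivAt (fun s => g s x) (fderiv ℝ (fun p : ℝ × X => g p.1 p.2) (t, x) (1, 0)) t :=
  HasFDerivAt.comp_hasDerivAt (f := fun s => (s, x)) t
    ((hg.contDiffAt (prod_mem_nhds ht Filter.univ_mem)).differentiableAt one_ne_zero).hasFDerivAt
    ((hasDerivAt_id t).prodMk (hasDerivAt_const t x))

theorem continuousOn_deriv_slice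
    (hg : ContDiffOn ℝ 1 (fun p : ℝ × X => g p.1 p.2) (I ×ˢ univ)) :
    ContinuousOn (fun p : ℝ × X => deriv (fun s => g s p.2) p.1) (interior I ×ˢ univ) :=
  (((hg.mono (prod_mono_left interior_subset)).continuousOn_fderiv_of_isOpen
    (isOpen_interior.prod isOpen_univ) le_rfl).clm_apply continuousOn_const).congr fun p hp =>
      (hasDerivAt_slice hg (mem_interior_iff_mem_nhds.1 hp.1) p.2).deriv

theorem continuous_deriv_slice
    (hg : ContDiffOn ℝ 1 (fun p : ℝ × X => g p.1 p.2) (I ×ˢ univ)) {t : ℝ} (ht : I ∈ 𝓝 t) :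
    Continuous fun x => deriv (fun s => g s x) t :=
  continuousOn_univ.1 ((continuousOn_deriv_slice hg).comp (f := fun x => (t, x)) (by fun_prop)
    fun _ _ => ⟨mem_interior_iff_mem_nhds.2 ht, trivial⟩)

end TimeSlices

theorem support_deriv_slice_subset {X F : Type*} [NormedAddCommGroup F] [NormedSpace ℝ F]
    {I : Set ℝ} {g : ℝ → X → F} {Q : Set X}
    (hgQ : ∀ s ∈ I, Function.support (g s) ⊆ Q) {t : ℝ} (ht : I ∈ 𝓝 t) :
    (Function.support fun x => deriv (fun s => g s x) t) ⊆ Q :=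
  Function.support_subset_iff'.2 fun x hx => by
    have vanishing : (fun s => g s x) =ᶠ[𝓝 t] fun _ => 0 :=
      Filter.mem_of_superset ht fun s hs => Function.support_subset_iff'.1 (hgQ s hs) x hx
    rw [vanishing.deriv_eq, deriv_const]

theorem hasDerivAt_integral_mul_of_locallyIntegrable {X : Type*} [NormedAddCommGroup X]
    [NormedSpace ℝ X] [FiniteDimensional ℝ X] [MeasurableSpace X] [BorelSpace X] {μ : Measure X}
    {κ : X → ℝ} (hκ : LocallyIntegrable κ μ) {I : Set ℝ} {g : ℝ → X → ℝ}
    (hg : ContDiffOn ℝ 1 (fun p : ℝ × X => g p.1 p.2) (I ×ˢ univ)) {Q : Set X} (hQ : IsCompact Q)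
    (hgQ : ∀ s ∈ I, Function.support (g s) ⊆ Q) {t : ℝ} (ht : I ∈ 𝓝 t) :
    HasDerivAt (fun s => ∫ x, κ x * g s x ∂μ) (∫ x, κ x * deriv (fun s => g s x) t ∂μ) t := by
  obtain ⟨ε, ε_pos, ball_subset⟩ :=
    Metric.nhds_basis_closedBall.mem_iff.1 (interior_mem_nhds.2 ht)
  have nhds_of_mem : ∀ s ∈ Metric.closedBall t ε, I ∈ 𝓝 s := fun s hs =>
    mem_interior_iff_mem_nhds.1 (ball_subset hs)
  obtain ⟨M, deriv_le⟩ := ((isCompact_closedBall t ε).prod hQ).exists_bound_of_continuousOn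
    ((continuousOn_deriv_slice hg).mono (prod_mono ball_subset (subset_univ Q)))
  have bound_integrable : Integrable (Q.indicator fun x => ‖κ x‖ * M) μ :=
    (integrable_indicator_iff hQ.measurableSet).2
      ((hκ.integrableOn_isCompact hQ).norm.mul_const M)
  have integrable : ∀ s ∈ I, Integrable (fun x => κ x * g s x) μ := fun s hs =>
    hκ.integrable_smul_right_of_hasCompactSupport (contDiff_slice hg hs).continuous
      (.of_support_subset_isCompact hQ (hgQ s hs))
  refine (hasDerivAt_integral_of_dominated_loc_of_deriv_le
    (F' := fun s x => κ x * deriv (fun r => g r x) s)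
    (Metric.closedBall_mem_nhds t ε_pos)
    (Filter.mem_of_superset ht fun s hs => (integrable s hs).aestronglyMeasurable)
    (integrable t (mem_of_mem_nhds ht))
    (hκ.aestronglyMeasurable.mul (continuous_deriv_slice hg ht).aestronglyMeasurable)
    (.of_forall fun x s hs => ?_) bound_integrable
    (.of_forall fun x s hs => ?_)).2
  · by_cases hx : x ∈ Q
    · rw [indicator_of_mem hx, norm_mul]
      exact mul_le_mul_of_nonneg_left (deriv_le (s, x) ⟨hs, hx⟩) (norm_nonneg _)
    · rw [indicator_of_notMem hx, Function.support_subset_iff'.1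
        (support_deriv_slice_subset hgQ (nhds_of_mem s hs)) x hx, mul_zero, norm_zero]
  · exact (hasDerivAt_slice hg (nhds_of_mem s hs) x).differentiableAt.hasDerivAt.const_mul _

variable {E : Type*} [NormedAddCommGroup E] [InnerProductSpace ℝ E] [FiniteDimensional ℝ E]
  [MeasurableSpace E] [BorelSpace E]

theorem integral_mul_potential_comm {κ f g : E → ℝ} (hκ : LocallyIntegrable κ)
    (κ_even : Function.Even κ) (hf : Continuous f) (hfc : HasCompactSupport f)
    (hg : Continuous g) (hgc : HasCompactSupport g) :
    ∫ x, f x * potential κ g x = ∫ x, g x * potential κ f x := by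
  rw [← integral_comp_sub_mul_mul hκ hf hfc hg hgc, ← integral_comp_sub_mul_mul hκ hg hgc hf hfc,
    Measure.volume_eq_prod, ← integral_prod_swap]
  refine integral_congr_ae (.of_forall fun p => ?_)
  simp only [Prod.fst_swap, Prod.snd_swap]
  rw [← neg_sub p.1 p.2, κ_even, mul_comm (f p.2)]

theorem hasDerivAt_integral_comp_sub_mul_mul {κ : E → ℝ} (hκ : LocallyIntegrable κ) {I : Set ℝ}
    {σ : ℝ → E → ℝ} (hσ : ContDiffOn ℝ 1 (fun p : ℝ × E => σ p.1 p.2) (I ×ˢ univ)) {Q : Set E}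
    (hQ : IsCompact Q) (hσQ : ∀ s ∈ I, Function.support (σ s) ⊆ Q) {t : ℝ} (ht : I ∈ 𝓝 t) :
    HasDerivAt (fun s => ∫ p : E × E, κ (p.1 - p.2) * (σ s p.1 * σ s p.2))
      (∫ p : E × E, κ (p.1 - p.2) * (deriv (fun s => σ s p.1) t * σ t p.2 +
        σ t p.1 * deriv (fun s => σ s p.2) t)) t := by
  have product_contDiff : ContDiffOn ℝ 1
      (fun p : ℝ × (E × E) => σ p.1 p.2.1 * σ p.1 p.2.2) (I ×ˢ univ) :=
    (hσ.comp (f := fun p : ℝ × (E × E) => (p.1, p.2.1)) (by fun_prop)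
      fun p hp => ⟨hp.1, trivial⟩).mul
    (hσ.comp (f := fun p : ℝ × (E × E) => (p.1, p.2.2)) (by fun_prop)
      fun p hp => ⟨hp.1, trivial⟩)
  have product_support : ∀ s ∈ I,
      (Function.support fun p : E × E => σ s p.1 * σ s p.2) ⊆ Q ×ˢ Q :=
    fun s hs p hp => ⟨hσQ s hs (left_ne_zero_of_mul hp), hσQ s hs (right_ne_zero_of_mul hp)⟩
  have product_deriv : ∀ p : E × E, deriv (fun s => σ s p.1 * σ s p.2) t =
      deriv (fun s => σ s p.1) t * σ t p.2 + σ t p.1 * deriv (fun s => σ s p.2) t := fun p =>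
    deriv_fun_mul (hasDerivAt_slice hσ ht p.1).differentiableAt
      (hasDerivAt_slice hσ ht p.2).differentiableAt
  simpa only [product_deriv] using hasDerivAt_integral_mul_of_locallyIntegrable
    (locallyIntegrable_comp_sub hκ) product_contDiff (hQ.prod hQ) product_support ht

theorem hasDerivAt_integral_mul_potential {κ : E → ℝ} (hκ : LocallyIntegrable κ)
    (κ_even : Function.Even κ) {I : Set ℝ} {σ : ℝ → E → ℝ}
    (hσ : ContDiffOn ℝ 1 (fun p : ℝ × E => σ p.1 p.2) (I ×ˢ univ)) {Q : Set E} (hQ : IsCompact Q)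
    (hσQ : ∀ s ∈ I, Function.support (σ s) ⊆ Q) {t : ℝ} (ht : I ∈ 𝓝 t) :
    HasDerivAt (fun s => ∫ x, σ s x * potential κ (σ s) x)
      (2 * ∫ x, deriv (fun s => σ s x) t * potential κ (σ t) x) t := by
  have σ_continuous : ∀ s ∈ I, Continuous (σ s) := fun s hs => (contDiff_slice hσ hs).continuous
  have σ_compact : ∀ s ∈ I, HasCompactSupport (σ s) := fun s hs =>
    .of_support_subset_isCompact hQ (hσQ s hs)
  have tI := mem_of_mem_nhds ht
  have σ'_continuous := continuous_deriv_slice hσ ht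
  have σ'_compact : HasCompactSupport fun x => deriv (fun s => σ s x) t :=
    .of_support_subset_isCompact hQ (support_deriv_slice_subset hσQ ht)
  have leibniz := hasDerivAt_integral_comp_sub_mul_mul hκ hσ hQ hσQ ht
  simp only [mul_add] at leibniz
  rw [integral_add
      (integrable_comp_sub_mul_mul hκ σ'_continuous σ'_compact (σ_continuous t tI) (σ_compact t tI))
      (integrable_comp_sub_mul_mul hκ (σ_continuous t tI) (σ_compact t tI)
        σ'_continuous σ'_compact),
    integral_comp_sub_mul_mul hκ σ'_continuous σ'_compact (σ_continuous t tI) (σ_compact t tI),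
    integral_comp_sub_mul_mul hκ (σ_continuous t tI) (σ_compact t tI) σ'_continuous σ'_compact,
    integral_mul_potential_comm hκ κ_even (σ_continuous t tI) (σ_compact t tI)
      σ'_continuous σ'_compact, ← two_mul] at leibniz
  exact leibniz.congr_of_eventuallyEq (Filter.mem_of_superset ht fun s hs =>
    (integral_comp_sub_mul_mul hκ (σ_continuous s hs) (σ_compact s hs)
      (σ_continuous s hs) (σ_compact s hs)).symm)

end Energy

section RelativeContinuityEquation

variable {E : Type*} [NormedAddCommGroup E] [InnerProductSpace ℝ E] [FiniteDimensional ℝ E]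
  [MeasurableSpace E] [BorelSpace E] {Φ : E → ℝ}

omit [FiniteDimensional ℝ E] [MeasurableSpace E] [BorelSpace E] in
theorem continuityEquation_sub {A B t : ℝ} {ρ n : ℝ → E → ℝ} {X Y : E → E}
    (hρ : ∀ x, DifferentiableAt ℝ (fun s => ρ s x) t)
    (hn : ∀ x, DifferentiableAt ℝ (fun s => n s x) t)
    (hX : Differentiable ℝ X) (hY : Differentiable ℝ Y)
    (hρX : ∀ x, A * deriv (fun s => ρ s x) t + B * divergence X x = 0)
    (hnY : ∀ x, A * deriv (fun s => n s x) t + B * divergence Y x = 0) (x : E) :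
    A * deriv (fun s => ρ s x - n s x) t + B * divergence (fun y => X y - Y y) x = 0 := by
  rw [deriv_fun_sub (hρ x) (hn x), divergence_sub (hX x) (hY x)]
  linear_combination hρX x - hnY x

theorem mul_integral_mul_eq_of_continuityEquation {A B : ℝ} {r : E → ℝ} {X : E → E}
    (h : ∀ x, A * r x + B * divergence X x = 0) (hΦ : ContDiff ℝ 1 Φ) (hX : ContDiff ℝ 1 X)
    (hXc : HasCompactSupport X) : A * ∫ x, r x * Φ x = B * ∫ x, fderiv ℝ Φ x (X x) := by
  have weak := congrArg (B * ·) (integral_mul_divergence hΦ hX hXc)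
  simp only [mul_neg] at weak
  rw [← neg_inj, ← weak, ← integral_const_mul, ← integral_const_mul, ← integral_neg]
  refine integral_congr_ae (.of_forall fun x => ?_)
  linear_combination -Φ x * h x

theorem integral_fderiv_sub_flux {ρ n : E → ℝ} {u v : E → E} (hΦ : ContDiff ℝ 1 Φ)
    (hρ : Continuous ρ) (hρc : HasCompactSupport ρ) (hn : Continuous n) (hnc : HasCompactSupport n)
    (hu : Continuous u) (hv : Continuous v) :
    ∫ x, fderiv ℝ Φ x (ρ x • u x - n x • v x) =
      (∫ x, ρ x * ⟪u x - v x, gradient Φ x⟫) + ∫ x, (ρ x - n x) * fderiv ℝ Φ x (v x) := by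
  have := hΦ.continuous_fderiv one_ne_zero
  simp only [inner_gradient_right, conj_trivial]
  rw [← integral_add]
  · refine integral_congr_ae (.of_forall fun x => ?_)
    simp only [map_sub, map_smul, smul_eq_mul]
    ring
  · exact Continuous.integrable_of_hasCompactSupport (by fun_prop) hρc.mul_right
  · exact Continuous.integrable_of_hasCompactSupport (by fun_prop) (hρc.sub hnc).mul_right

theorem neg_mul_integral_inner_gradient_rieszPotential_le {c α L C A B : ℝ} (hc : 0 ≤ c)
    (hα : α ∈ Set.Ioc 0 1) (h2α : 2 * α < finrank ℝ E) (hB : 0 ≤ B) {ρ n r : E → ℝ} {u v : E → E}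
    (hρ : ContDiff ℝ 1 ρ) (hρc : HasCompactSupport ρ) (hn : ContDiff ℝ 1 n)
    (hnc : HasCompactSupport n) (hu : ContDiff ℝ 1 u) (hv : ContDiff ℝ 1 v)
    (hL : ∀ x, ‖fderiv ℝ v x‖ ≤ L) (hC : (finrank ℝ E / 2 + 1) * L ≤ C)
    (h : ∀ x, A * r x + B * divergence (fun y => ρ y • u y - n y • v y) x = 0) :
    -B * (∫ x, ρ x *
        ⟪u x - v x, gradient (potential (rieszKernel c α) fun y => ρ y - n y) x⟫) ≤
      -(A / 2) * (2 * ∫ x, r x * potential (rieszKernel c α) (fun y => ρ y - n y) x) +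
        C * B * ∫ x, (ρ x - n x) * potential (rieszKernel c α) (fun y => ρ y - n y) x := by
  have σ_C1 : ContDiff ℝ 1 fun x => ρ x - n x := hρ.sub hn
  have σ_compact : HasCompactSupport fun x => ρ x - n x := hρc.sub hnc
  have potential_C1 :=
    contDiff_potential (locallyIntegrable_rieszKernel (E := E) c hα.1) σ_C1 σ_compact
  have weak := mul_integral_mul_eq_of_continuityEquation h potential_C1
    ((hρ.smul hu).sub (hn.smul hv)) (hρc.smul_right.sub hnc.smul_right)
  rw [integral_fderiv_sub_flux potential_C1 hρ.continuous hρc hn.continuous hnc hu.continuous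
    hv.continuous] at weak
  have commutator := integral_mul_fderiv_rieszPotential_le hc hα h2α
    (hv.differentiable one_ne_zero) hL hC σ_C1 σ_compact
  linear_combination weak + mul_le_mul_of_nonneg_left commutator hB

end RelativeContinuityEquation

end RieszEnergy

theorem modulated_riesz_energy_estimate_general {E : Type*} [NormedAddCommGroup E]
    [InnerProductSpace ℝ E] [FiniteDimensional ℝ E] [MeasurableSpace E] [BorelSpace E]
    {c α L C A B : ℝ} (hc : 0 ≤ c) (hα : α ∈ Set.Ioc 0 1) (h2α : 2 * α < Module.finrank ℝ E)
    (hC : (Module.finrank ℝ E / 2 + 1) * L ≤ C) (hB : 0 ≤ B) {I : Set ℝ} {t : ℝ}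
    (ht : I ∈ nhds t) {ρ n : ℝ → E → ℝ} {u v : E → E}
    (hρ : ContDiffOn ℝ 1 (fun p : ℝ × E => ρ p.1 p.2) (I ×ˢ Set.univ))
    (hn : ContDiffOn ℝ 1 (fun p : ℝ × E => n p.1 p.2) (I ×ˢ Set.univ))
    {S : Set E} (hS : IsCompact S)
    (hsupp : ∀ s ∈ I, Function.support (ρ s) ⊆ S ∧ Function.support (n s) ⊆ S)
    (hu : ContDiff ℝ 1 u) (hv : ContDiff ℝ 1 v) (hL : ∀ x, ‖fderiv ℝ v x‖ ≤ L)
    (hρu : ∀ x, A * deriv (fun s => ρ s x) t +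
      B * RieszEnergy.divergence (fun y => ρ t y • u y) x = 0)
    (hnv : ∀ x, A * deriv (fun s => n s x) t +
      B * RieszEnergy.divergence (fun y => n t y • v y) x = 0) :
    ∃ E' : ℝ,
      HasDerivAt
        (fun s => ∫ x, (ρ s x - n s x) *
          ∫ y, c * ‖x - y‖ ^ (2 * α - Module.finrank ℝ E) * (ρ s y - n s y)) E' t ∧
      -B * (∫ x, ρ t x *
          ⟪u x - v x, gradient (fun z =>
            ∫ y, c * ‖z - y‖ ^ (2 * α - Module.finrank ℝ E) * (ρ t y - n t y)) x⟫)
        ≤ -(A / 2) * E'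
          + C * B * ∫ x, (ρ t x - n t x) *
              ∫ y, c * ‖x - y‖ ^ (2 * α - Module.finrank ℝ E) * (ρ t y - n t y) := by
  have tI := mem_of_mem_nhds ht
  have ρ_C1 := RieszEnergy.contDiff_slice hρ tI
  have n_C1 := RieszEnergy.contDiff_slice hn tI
  have σ_support : ∀ s ∈ I, (Function.support fun x => ρ s x - n s x) ⊆ S := fun s hs =>
    (Function.support_sub _ _).trans (Set.union_subset (hsupp s hs).1 (hsupp s hs).2)
  have relative_continuity := RieszEnergy.continuityEquation_sub
    (fun x => (RieszEnergy.hasDerivAt_slice hρ ht x).differentiableAt)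
    (fun x => (RieszEnergy.hasDerivAt_slice hn ht x).differentiableAt)
    ((ρ_C1.smul hu).differentiable one_ne_zero) ((n_C1.smul hv).differentiable one_ne_zero) hρu hnv
  exact ⟨_, RieszEnergy.hasDerivAt_integral_mul_potential
    (RieszEnergy.locallyIntegrable_rieszKernel c hα.1) (RieszEnergy.even_rieszKernel c α)
    (hρ.sub hn) hS σ_support ht,
    RieszEnergy.neg_mul_integral_inner_gradient_rieszPotential_le hc hα h2α hB ρ_C1
      (.of_support_subset_isCompact hS (hsupp t tI).1) n_C1
      (.of_support_subset_isCompact hS (hsupp t tI).2) hu hv hL hC relative_continuity⟩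

/-- Modulated Riesz interaction energy estimate: for two compactly supported solutions of
the continuity equations `A ∂_t ρ + B ∇·(ρu) = 0` and `A ∂_t n + B ∇·(nv) = 0`, with
`E(t) = ∫ (ρ−n) (K ⋆ (ρ−n))` and Riesz kernel `K(x) = c|x|^{2α−d}`,
`−B ∫ ρ (u−v)·∇(K ⋆ (ρ−n)) ≤ −(A/2) E' + C B E` for a constant `C` depending only on
`d`, `α` and `L = sup |∇v|`. -/
theorem modulated_riesz_energy_estimate
    (d : ℕ) (hd : 1 ≤ d) (α : ℝ) (hα : α ∈ Set.Ioc (0 : ℝ) 1) (h2α : 2 * α < d) (L : ℝ) :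
    ∃ C > 0, ∀ (c : ℝ), 0 < c → ∀ (A B T : ℝ), 0 < A → 0 < B → 0 < T →
      ∀ (ρ n : ℝ → EuclideanSpace ℝ (Fin d) → ℝ)
        (u v : ℝ → EuclideanSpace ℝ (Fin d) → EuclideanSpace ℝ (Fin d)),
        ContDiffOn ℝ 1 (fun p : ℝ × EuclideanSpace ℝ (Fin d) => ρ p.1 p.2)
          (Set.Icc 0 T ×ˢ (Set.univ : Set (EuclideanSpace ℝ (Fin d)))) →
        ContDiffOn ℝ 1 (fun p : ℝ × EuclideanSpace ℝ (Fin d) => n p.1 p.2)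
          (Set.Icc 0 T ×ˢ (Set.univ : Set (EuclideanSpace ℝ (Fin d)))) →
        (∀ t ∈ Set.Icc (0 : ℝ) T, ∀ x, 0 ≤ ρ t x) →
        (∀ t ∈ Set.Icc (0 : ℝ) T, ∀ x, 0 ≤ n t x) →
        (∃ S : Set (EuclideanSpace ℝ (Fin d)), IsCompact S ∧
          ∀ t ∈ Set.Icc (0 : ℝ) T,
            Function.support (ρ t) ⊆ S ∧ Function.support (n t) ⊆ S) →
        ContDiffOn ℝ 1 (fun p : ℝ × EuclideanSpace ℝ (Fin d) => u p.1 p.2)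
          (Set.Icc 0 T ×ˢ (Set.univ : Set (EuclideanSpace ℝ (Fin d)))) →
        ContDiffOn ℝ 1 (fun p : ℝ × EuclideanSpace ℝ (Fin d) => v p.1 p.2)
          (Set.Icc 0 T ×ˢ (Set.univ : Set (EuclideanSpace ℝ (Fin d)))) →
        (∀ t ∈ Set.Icc (0 : ℝ) T, ∀ x, ‖fderiv ℝ (v t) x‖ ≤ L) →
        (∀ t ∈ Set.Ioo (0 : ℝ) T, ∀ x,
          A * deriv (fun s => ρ s x) t + B * ediv (fun y => ρ t y • u t y) x = 0) →
        (∀ t ∈ Set.Ioo (0 : ℝ) T, ∀ x,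
          A * deriv (fun s => n s x) t + B * ediv (fun y => n t y • v t y) x = 0) →
        ∀ t ∈ Set.Ioo (0 : ℝ) T,
          ∃ E' : ℝ,
            HasDerivAt
              (fun s => ∫ x, (ρ s x - n s x) *
                ∫ y, c * ‖x - y‖ ^ (2 * α - d) * (ρ s y - n s y)) E' t ∧
            -B * (∫ x, ρ t x *
                ⟪u t x - v t x,
                  gradient (fun z => ∫ y, c * ‖z - y‖ ^ (2 * α - d) * (ρ t y - n t y)) x⟫)
              ≤ -(A / 2) * E'
                + C * B * ∫ x, (ρ t x - n t x) *
                    ∫ y, c * ‖x - y‖ ^ (2 * α - d) * (ρ t y - n t y) := by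
  refine ⟨(d / 2 + 1) * |L| + 1, by positivity, fun c hc A B T _ hB _ ρ n u v hρ hn _ _
    ⟨S, hS, hsupp⟩ hu hv hL hρu hnv t ht => ?_⟩
  have estimate := modulated_riesz_energy_estimate_general
    (E := EuclideanSpace ℝ (Fin d)) (C := (d / 2 + 1) * |L| + 1) (A := A) hc.le hα
    (by rwa [finrank_euclideanSpace_fin])
    (by rw [finrank_euclideanSpace_fin]
        exact (mul_le_mul_of_nonneg_left (le_abs_self L) (by positivity)).trans (by simp))
    hB.le (Icc_mem_nhds ht.1 ht.2) hρ hn hS hsupp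
    (RieszEnergy.contDiff_slice hu (Set.Ioo_subset_Icc_self ht))
    (RieszEnergy.contDiff_slice hv (Set.Ioo_subset_Icc_self ht))
    (hL t (Set.Ioo_subset_Icc_self ht))
    (by simpa only [RieszEnergy.ediv_eq_divergence] using hρu t ht)
    (by simpa only [RieszEnergy.ediv_eq_divergence] using hnv t ht)
  simpa only [RieszEnergy.potential, RieszEnergy.rieszKernel, finrank_euclideanSpace_fin]
    using estimate
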